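/- arXiv:0710.3991 — 6 statements merged into one kernel-verified Lean document; each statement's English description precedes it below -/
import Mathlib

section
/- Let X ⊂ ℝⁿ be open and u : X → [−∞, ∞) upper semicontinuous. (i) If u is locally subaffine on X (every point of X has an open neighborhood B ⊂ X such that the restriction of u to B is subaffine on B), then u is subaffine on X. (ii) Moreover, u fails to be locally subaffine on X if and only if there exist a point x₀ ∈ X, an affine function a on ℝⁿ, and ε > 0 such that u(x) − a(x) ≤ −ε|x − x₀|² for all x in some neighborhood of x₀ and u(x₀) − a(x₀) = 0. -/
open Set Metric Filter MeasureTheory Asymptotics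
open scoped Topology BigOperators RealInnerProductSpace

noncomputable section

abbrev Euc (n : ℕ) : Type := EuclideanSpace ℝ (Fin n)

abbrev SymMat (n : ℕ) : Type := ↥(selfAdjoint (Matrix (Fin n) (Fin n) ℝ))

/-- `u` is subaffine on `X`. -/
def SubaffineOn {n : ℕ} (X : Set (Euc n)) (u : Euc n → EReal) : Prop :=
  ∀ K : Set (Euc n), IsCompact K → K ⊆ X →
    ∀ a : Euc n →ᵃ[ℝ] ℝ,
      (∀ x ∈ frontier K, u x ≤ (a x : EReal)) → ∀ x ∈ K, u x ≤ (a x : EReal)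

/-- The Hessian matrix of `u` at `x`. -/
def hessMat {n : ℕ} (u : Euc n → ℝ) (x : Euc n) : Matrix (Fin n) (Fin n) ℝ :=
  fun i j => iteratedFDeriv ℝ 2 u x ![EuclideanSpace.single i 1, EuclideanSpace.single j 1]

structure IsDirichletSet {n : ℕ} (F : Set (SymMat n)) : Prop where
  nonempty : F.Nonempty
  ne_univ : F ≠ Set.univ
  isClosed : IsClosed F
  add_psd : ∀ A ∈ F, ∀ P : SymMat n, (P : Matrix (Fin n) (Fin n) ℝ).PosSemidef → A + P ∈ F

/-- The Dirichlet dual `F̃ = −(∼ Int F)`. -/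
def dirDual {n : ℕ} (F : Set (SymMat n)) : Set (SymMat n) := {A | -A ∉ interior F}

/-- A C² function `v` on `X` is of type `F`. -/
def IsTypeFC2 {n : ℕ} (F : Set (SymMat n)) (X : Set (Euc n)) (v : Euc n → ℝ) : Prop :=
  ContDiffOn ℝ 2 v X ∧ ∀ x ∈ X, ∃ A ∈ F, (A : Matrix (Fin n) (Fin n) ℝ) = hessMat v x

/-- An u.s.c. function `u` is of type `F` on `X`. -/
def IsTypeF {n : ℕ} (F : Set (SymMat n)) (X : Set (Euc n)) (u : Euc n → EReal) : Prop :=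
  ∀ v : Euc n → ℝ, IsTypeFC2 (dirDual F) X v → SubaffineOn X (fun x => u x + (v x : EReal))

/-- The ray set `F⃗` of `F`. -/
def raySet {n : ℕ} (F : Set (SymMat n)) : Set (SymMat n) :=
  closure {A : SymMat n | ∃ t₀ : ℝ, ∀ t : ℝ, t₀ ≤ t → t • A ∈ F}

/-- The bilinear form `⟨A v, w⟩` of a matrix. -/
def bilin {n : ℕ} (A : Matrix (Fin n) (Fin n) ℝ) (v w : Euc n) : ℝ :=
  ∑ i, ∑ j, A i j * v i * w j

/-- `A` is not negative definite. -/
def NotNegDef {n : ℕ} (A : SymMat n) : Prop :=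
  ¬ (-(A : Matrix (Fin n) (Fin n) ℝ)).PosDef

def IsLocalDefiningFn {n : ℕ} (Ω U : Set (Euc n)) (ρ : Euc n → ℝ) : Prop :=
  IsOpen U ∧ ContDiffOn ℝ (⊤ : ℕ∞) ρ U ∧ Ω ∩ U = {y ∈ U | ρ y < 0} ∧ ∀ y ∈ U, fderiv ℝ ρ y ≠ 0

def HasSmoothBoundary {n : ℕ} (Ω : Set (Euc n)) : Prop :=
  ∀ x ∈ frontier Ω, ∃ U ρ, x ∈ U ∧ IsLocalDefiningFn Ω U ρ

/-- `∂Ω` is strictly `G`-convex at `x`. -/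
def StrictlyConvexAt {n : ℕ} (G : Set (SymMat n)) (Ω : Set (Euc n)) (x : Euc n) : Prop :=
  ∃ U ρ, x ∈ U ∧ IsLocalDefiningFn Ω U ρ ∧
    ∃ B ∈ interior G, ∀ v w : Euc n, fderiv ℝ ρ x v = 0 → fderiv ℝ ρ x w = 0 →
      bilin (hessMat ρ x) v w = bilin (B : Matrix (Fin n) (Fin n) ℝ) v w

def symOne (n : ℕ) : SymMat n := ⟨1, selfAdjoint.mem_iff.mpr (IsSelfAdjoint.one _)⟩

/-- `u` is twice differentiable at `x` with Hessian `A`. -/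
def TwiceDiffWithHessAt {n : ℕ} (u : Euc n → ℝ) (x : Euc n)
    (A : Matrix (Fin n) (Fin n) ℝ) : Prop :=
  ∃ p : Euc n, (fun h : Euc n => u (x + h) - u x - ⟪p, h⟫ - 1/2 * bilin A h h)
      =o[𝓝 (0 : Euc n)] fun h => ‖h‖ ^ 2

/-!
If `u > a` at a point of a compact `K ⊆ X` while `u ≤ a` on `∂K`, then for small `ε > 0` the maximum
over `K` of the perturbation `u - a + ε‖x‖²` is still attained where `u > a`, hence at an interior
point `x₀`. Since `‖x‖² - ‖x - x₀‖²` is affine, maximality there says that an affine function minus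
`ε‖x - x₀‖²` touches `u` from above at `x₀`. Conversely, at such a contact point, lowering the
affine function by `ε r²` keeps it above `u` on the sphere of small radius `r` but not at the
centre, so `u` is subaffine on no neighborhood of `x₀`.
-/

section SmallPerturbation

variable {Y : Type*} [TopologicalSpace Y] {K : Set Y} {f : Y → EReal} {q : Y → ℝ}

lemma upperSemicontinuousOn_add_coe (hf : UpperSemicontinuousOn f K) (hq : ContinuousOn q K) :
    UpperSemicontinuousOn (fun x => f x + (q x : EReal)) K :=
  hf.add' (continuous_coe_real_ereal.comp_continuousOn hq).upperSemicontinuousOn fun _ _ =>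
    EReal.continuousAt_add (.inr (EReal.coe_ne_bot _)) (.inr (EReal.coe_ne_top _))

lemma exists_pos_isMaxOn_add_mul (hK : IsCompact K) (hf : UpperSemicontinuousOn f K)
    (hq : ContinuousOn q K) {y : Y} (hy : y ∈ K) (hfy : 0 < f y) :
    ∃ ε : ℝ, 0 < ε ∧ ∃ x₀ ∈ K, 0 < f x₀ ∧
      IsMaxOn (fun x => f x + ((ε * q x : ℝ) : EReal)) K x₀ := by
  obtain ⟨δ, hδ, hδf⟩ := EReal.lt_iff_exists_real_btwn.1 hfy
  obtain ⟨M, hM⟩ := hK.bddAbove_image hq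
  obtain ⟨ε, hε, hεδ⟩ := exists_pos_mul_lt (EReal.coe_pos.1 hδ) (M - q y)
  obtain ⟨x₀, hx₀, hmax⟩ :=
    (upperSemicontinuousOn_add_coe hf (hq.const_mul ε)).exists_isMaxOn ⟨y, hy⟩ hK
  refine ⟨ε, hε, x₀, hx₀, ?_, hmax⟩
  by_contra! hfx₀
  have hqx₀ : ε * q x₀ < δ + ε * q y := by
    linarith [mul_le_mul_of_nonneg_left (hM (mem_image_of_mem q hx₀)) hε.le]
  refine (isMaxOn_iff.1 hmax y hy).not_gt ?_
  calc f x₀ + ((ε * q x₀ : ℝ) : EReal)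
      ≤ ((ε * q x₀ : ℝ) : EReal) := by simpa only [zero_add] using add_le_add_left hfx₀ _
    _ < ((δ + ε * q y : ℝ) : EReal) := EReal.coe_lt_coe_iff.2 hqx₀
    _ = (δ : EReal) + ((ε * q y : ℝ) : EReal) := EReal.coe_add _ _
    _ ≤ f y + ((ε * q y : ℝ) : EReal) := add_le_add_left hδf.le _

end SmallPerturbation

section UpperContact

variable {E : Type*} [NormedAddCommGroup E] [InnerProductSpace ℝ E]

/-- The point `x₀` is a strict upper contact point of `u`: the sum of an affine function and a
strictly concave paraboloid with vertex at `x₀` touches `u` from above at `x₀`, as in the failure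
criterion for subaffinity. In particular `u x₀` is finite. -/
def IsStrictUpperContactPt (u : E → EReal) (x₀ : E) : Prop :=
  ∃ a : E →ᵃ[ℝ] ℝ, ∃ ε : ℝ, 0 < ε ∧
    (∀ᶠ x in 𝓝 x₀, u x ≤ ((a x - ε * ‖x - x₀‖ ^ 2 : ℝ) : EReal)) ∧ u x₀ = (a x₀ : EReal)

/-- The affine function tangent to `‖·‖²` at `x₀`, that is `x ↦ 2⟪x₀, x⟫ - ‖x₀‖²`; it turns a
paraboloid centred at `0` into one centred at `x₀`. -/
def normSqTangent (x₀ : E) : E →ᵃ[ℝ] ℝ :=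
  ((2 : ℝ) • (innerSL ℝ x₀).toLinearMap).toAffineMap - AffineMap.const ℝ E (‖x₀‖ ^ 2)

lemma normSqTangent_eq (x₀ x : E) : normSqTangent x₀ x = ‖x‖ ^ 2 - ‖x - x₀‖ ^ 2 := by
  have hval : normSqTangent x₀ x = 2 * inner ℝ x₀ x - ‖x₀‖ ^ 2 := by simp [normSqTangent]
  rw [hval, norm_sub_sq_real, real_inner_comm]
  ring

lemma isStrictUpperContactPt_of_isLocalMax {u : E → EReal} {a : E →ᵃ[ℝ] ℝ} {x₀ : E} {ε : ℝ}
    (hε : 0 < ε) (htop : u x₀ ≠ ⊤) (hbot : u x₀ ≠ ⊥)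
    (hmax : IsLocalMax (fun x => u x - (a x : EReal) + ((ε * ‖x‖ ^ 2 : ℝ) : EReal)) x₀) :
    IsStrictUpperContactPt u x₀ := by
  obtain ⟨d, hd⟩ : ∃ d : ℝ, u x₀ = d := ⟨(u x₀).toReal, (EReal.coe_toReal htop hbot).symm⟩
  let c : ℝ := d - a x₀ + ε * ‖x₀‖ ^ 2
  let b : E →ᵃ[ℝ] ℝ := a + AffineMap.const ℝ E c - ε • normSqTangent x₀
  have hb (x : E) : b x - ε * ‖x - x₀‖ ^ 2 = c - ε * ‖x‖ ^ 2 + a x := by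
    simp only [b, AffineMap.coe_sub, AffineMap.coe_add, AffineMap.coe_smul, AffineMap.coe_const,
      Pi.sub_apply, Pi.add_apply, Pi.smul_apply, Function.const_apply, smul_eq_mul,
      normSqTangent_eq]
    ring
  refine ⟨b, ε, hε, ?_, ?_⟩
  · filter_upwards [hmax] with x hx
    rw [hd, ← EReal.coe_sub, ← EReal.coe_add] at hx
    have hsub : u x - (a x : EReal) ≤ ((c - ε * ‖x‖ ^ 2 : ℝ) : EReal) :=
      (EReal.le_sub_iff_add_le (.inl (EReal.coe_ne_bot _)) (.inl (EReal.coe_ne_top _))).2 hx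
    rw [hb, EReal.coe_add]
    exact (EReal.sub_le_iff_le_add (.inl (EReal.coe_ne_bot _)) (.inl (EReal.coe_ne_top _))).1 hsub
  · have hbx₀ : b x₀ = d := by simpa [c] using hb x₀
    rw [hd, hbx₀]

end UpperContact

/-- Local subaffinity of `u` on `X`: subaffinity on some open neighborhood, contained in `X`, of
each point of `X`; this is the local property that the theorem compares with `SubaffineOn`. -/
def LocallySubaffineOn {n : ℕ} (X : Set (Euc n)) (u : Euc n → EReal) : Prop :=
  ∀ x ∈ X, ∃ B, IsOpen B ∧ x ∈ B ∧ B ⊆ X ∧ SubaffineOn B u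

section Subaffine

variable {n : ℕ} {X : Set (Euc n)} {u : Euc n → EReal} {x₀ : Euc n}

lemma SubaffineOn.locallySubaffineOn (hu : SubaffineOn X u) (hX : IsOpen X) :
    LocallySubaffineOn X u :=
  fun _ hx => ⟨X, hX, hx, subset_rfl, hu⟩

lemma exists_isStrictUpperContactPt_of_not_subaffineOn (husc : UpperSemicontinuousOn u X)
    (hfin : ∀ x ∈ X, u x ≠ ⊤) (hu : ¬ SubaffineOn X u) :
    ∃ x₀ ∈ X, IsStrictUpperContactPt u x₀ := by
  unfold SubaffineOn at hu
  push Not at hu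
  obtain ⟨K, hK, hKX, a, hfr, y, hy, hay⟩ := hu
  have ha : Continuous a := a.continuous_of_finiteDimensional
  have husub : UpperSemicontinuousOn (fun x => u x - (a x : EReal)) K :=
    upperSemicontinuousOn_add_coe (husc.mono hKX) ha.neg.continuousOn
  obtain ⟨ε, hε, x₀, hx₀, hpos, hmax⟩ := exists_pos_isMaxOn_add_mul hK husub
    (continuous_norm.pow 2).continuousOn hy (EReal.sub_pos.2 hay)
  have hax₀ : a x₀ < u x₀ := EReal.sub_pos.1 hpos
  have hint : x₀ ∈ interior K :=
    self_sdiff_frontier K ▸ ⟨hx₀, fun hx₀fr => (hfr x₀ hx₀fr).not_gt hax₀⟩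
  exact ⟨x₀, hKX hx₀, isStrictUpperContactPt_of_isLocalMax hε (hfin x₀ (hKX hx₀))
    hax₀.ne_bot (hmax.isLocalMax (mem_interior_iff_mem_nhds.1 hint))⟩

lemma IsStrictUpperContactPt.not_subaffineOn (hu : IsStrictUpperContactPt u x₀)
    (hX : X ∈ 𝓝 x₀) : ¬ SubaffineOn X u := by
  intro hsub
  obtain ⟨a, ε, hε, hle, hux₀⟩ := hu
  obtain ⟨r, hr, hball⟩ := nhds_basis_closedBall.mem_iff.1 (inter_mem hle hX)
  have hsphere : ∀ x ∈ frontier (closedBall x₀ r),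
      u x ≤ ((a - AffineMap.const ℝ (Euc n) (ε * r ^ 2)) x : EReal) := by
    intro x hx
    have hxr := frontier_closedBall_subset_sphere hx
    have hux := (hball (sphere_subset_closedBall hxr)).1
    rw [mem_sphere_iff_norm] at hxr
    simpa [hxr] using hux
  have hcentre := hsub _ (isCompact_closedBall x₀ r) (fun x hx => (hball hx).2) _ hsphere x₀
    (mem_closedBall_self hr.le)
  rw [hux₀, EReal.coe_le_coe_iff] at hcentre
  have hdrop : a x₀ ≤ a x₀ - ε * r ^ 2 := by simpa using hcentre
  exact hdrop.not_gt (sub_lt_self _ (by positivity))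

lemma LocallySubaffineOn.not_isStrictUpperContactPt (hu : LocallySubaffineOn X u)
    (hx₀ : x₀ ∈ X) : ¬ IsStrictUpperContactPt u x₀ := by
  intro hcontact
  obtain ⟨B, hB, hx₀B, -, hsub⟩ := hu x₀ hx₀
  exact hcontact.not_subaffineOn (hB.mem_nhds hx₀B) hsub

end Subaffine

/-- Lemma 2.2: locally subaffine implies subaffine, and the
characterization of failure of (local) subaffinity. -/
theorem locally_subaffine_iff {n : ℕ} (X : Set (Euc n)) (hX : IsOpen X)
    (u : Euc n → EReal) (husc : UpperSemicontinuousOn u X) (hfin : ∀ x ∈ X, u x ≠ ⊤) :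
    ((∀ x ∈ X, ∃ B, IsOpen B ∧ x ∈ B ∧ B ⊆ X ∧ SubaffineOn B u) → SubaffineOn X u) ∧
    (¬ (∀ x ∈ X, ∃ B, IsOpen B ∧ x ∈ B ∧ B ⊆ X ∧ SubaffineOn B u) ↔
      ∃ x₀ ∈ X, ∃ a : Euc n →ᵃ[ℝ] ℝ, ∃ ε : ℝ, 0 < ε ∧
        (∀ᶠ x in 𝓝 x₀, u x ≤ ((a x - ε * ‖x - x₀‖ ^ 2 : ℝ) : EReal)) ∧
        u x₀ = (a x₀ : EReal)) := by
  have contact_of_not_subaffine :=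
    exists_isStrictUpperContactPt_of_not_subaffineOn husc hfin
  refine ⟨fun (hloc : LocallySubaffineOn X u) => ?_, fun hnotloc => ?_,
    fun ⟨x₀, hx₀, hcontact⟩ (hloc : LocallySubaffineOn X u) => ?_⟩
  · by_contra hsub
    obtain ⟨x₀, hx₀, hcontact⟩ := contact_of_not_subaffine hsub
    exact hloc.not_isStrictUpperContactPt hx₀ hcontact
  · exact contact_of_not_subaffine fun hsub => hnotloc (hsub.locallySubaffineOn hX)
  · exact hloc.not_isStrictUpperContactPt hx₀ hcontact
end
end

section
/- Let K ⊂ ℝⁿ be compact and u : K → [−∞, ∞) upper semicontinuous. If u is locally subaffine on the interior of K (every point of Int K has an open neighborhood contained in Int K on which u is subaffine), then sup_K u ≤ sup_{∂K} u. -/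
open Set Metric Filter MeasureTheory Asymptotics
open scoped Topology BigOperators RealInnerProductSpace

noncomputable section

/-!
Suppose `u x₀ > c := sup_{∂K} u`. For small `ε > 0` the upper semicontinuous function `u + ε ‖·‖²`
attains its maximum over `K` at a point `y` with `u y > c`, hence at an interior point. On a sphere
about `y` the function `‖·‖²` coincides with an affine function which is larger than `‖·‖²` at the
center, so that `u` lies below an affine function on the sphere but above it at `y`. This is
incompatible with subaffinity near `y`.
-/

section Perturbation

variable {X : Type*} [TopologicalSpace X] {K : Set X} {u : X → EReal} {v : X → ℝ}

theorem upperSemicontinuousOn_add_coe_s1 (hu : UpperSemicontinuousOn u K) (hv : ContinuousOn v K) :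
    UpperSemicontinuousOn (fun x ↦ u x + (v x : EReal)) K :=
  hu.add' (continuous_coe_real_ereal.comp_continuousOn hv).upperSemicontinuousOn fun _ _ ↦
    EReal.continuousAt_add (.inr (EReal.coe_ne_bot _)) (.inr (EReal.coe_ne_top _))

theorem exists_pos_forall_mul_sub_le (hK : IsCompact K) (hv : ContinuousOn v K) (b : ℝ)
    {δ : ℝ} (hδ : 0 < δ) : ∃ ε > 0, ∀ x ∈ K, ε * (v x - b) ≤ δ := by
  obtain ⟨M, hM⟩ := hK.bddAbove_image hv
  obtain ⟨ε, hε, hεM⟩ := exists_pos_mul_lt hδ (M - b)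
  refine ⟨ε, hε, fun x hx ↦ ?_⟩
  calc ε * (v x - b) ≤ ε * (M - b) := by gcongr; exact hM (mem_image_of_mem v hx)
    _ ≤ δ := by rw [mul_comm]; exact hεM.le

theorem exists_isMaxOn_add_mul_and_lt (hK : IsCompact K) (hu : UpperSemicontinuousOn u K)
    (hv : ContinuousOn v K) {c : EReal} {x₀ : X} (hx₀ : x₀ ∈ K) (hc : c < u x₀) :
    ∃ ε > 0, ∃ y ∈ K, IsMaxOn (fun x ↦ u x + ((ε * v x : ℝ) : EReal)) K y ∧ c < u y := by
  obtain ⟨s, hcs, hs⟩ := EReal.lt_iff_exists_real_btwn.mp hc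
  obtain ⟨t, hst, ht⟩ := EReal.lt_iff_exists_real_btwn.mp hs
  obtain ⟨ε, hε, hεv⟩ :=
    exists_pos_forall_mul_sub_le hK hv (v x₀) (sub_pos.mpr (EReal.coe_lt_coe_iff.mp hst))
  obtain ⟨y, hy, hmax⟩ :=
    (upperSemicontinuousOn_add_coe_s1 hu (hv.const_mul ε)).exists_isMaxOn ⟨x₀, hx₀⟩ hK
  refine ⟨ε, hε, y, hy, hmax, hcs.trans_le (le_of_not_gt fun hys ↦ ?_)⟩
  have hst' : s + ε * v y ≤ t + ε * v x₀ := by linarith [hεv y hy]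
  refine (isMaxOn_iff.mp hmax x₀ hx₀).not_gt ?_
  calc u y + ((ε * v y : ℝ) : EReal) < s + ((ε * v y : ℝ) : EReal) :=
        EReal.add_lt_add_right_coe hys _
    _ ≤ t + ((ε * v x₀ : ℝ) : EReal) := mod_cast hst'
    _ < u x₀ + ((ε * v x₀ : ℝ) : EReal) := EReal.add_lt_add_right_coe ht _

end Perturbation

section InnerProductSpace

variable {E : Type*} [NormedAddCommGroup E] [InnerProductSpace ℝ E] {u : E → EReal}

theorem exists_affineMap_eq_norm_sq_on_sphere (y : E) (r : ℝ) :
    ∃ a : E →ᵃ[ℝ] ℝ, (∀ x ∈ sphere y r, a x = ‖x‖ ^ 2) ∧ a y = ‖y‖ ^ 2 + r ^ 2 := by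
  let a : E →ᵃ[ℝ] ℝ :=
    ((2 : ℝ) • innerₛₗ ℝ y).toAffineMap + AffineMap.const ℝ E (r ^ 2 - ‖y‖ ^ 2)
  have ha (x : E) : a x = 2 * ⟪y, x⟫ + (r ^ 2 - ‖y‖ ^ 2) := by simp [a]
  refine ⟨a, fun x hx ↦ ?_, ?_⟩
  · have hpolar := norm_sub_sq_real x y
    rw [mem_sphere_iff_norm.mp hx, real_inner_comm] at hpolar
    rw [ha]
    linarith
  · rw [ha, real_inner_self_eq_norm_sq]
    ring

theorem exists_affineMap_lt_of_isMaxOn_add_mul_norm_sq {y : E} {r ε : ℝ} (hr : 0 < r) (hε : 0 < ε)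
    (hbot : u y ≠ ⊥) (htop : u y ≠ ⊤)
    (hmax : IsMaxOn (fun x ↦ u x + ((ε * ‖x‖ ^ 2 : ℝ) : EReal)) (sphere y r) y) :
    ∃ a : E →ᵃ[ℝ] ℝ, (∀ x ∈ sphere y r, u x ≤ (a x : EReal)) ∧ (a y : EReal) < u y := by
  obtain ⟨q, hq, hqy⟩ := exists_affineMap_eq_norm_sq_on_sphere y r
  obtain ⟨s, hs⟩ : ∃ s : ℝ, (s : EReal) = u y := ⟨_, EReal.coe_toReal htop hbot⟩
  refine ⟨AffineMap.const ℝ E (s + ε * ‖y‖ ^ 2) - ε • q, fun x hx ↦ ?_, ?_⟩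
  · calc u x ≤ u y + ((ε * ‖y‖ ^ 2 : ℝ) : EReal) - ((ε * ‖x‖ ^ 2 : ℝ) : EReal) :=
          (EReal.le_sub_iff_add_le (.inl (EReal.coe_ne_bot _)) (.inl (EReal.coe_ne_top _))).mpr
            (hmax hx)
      _ = ((s + ε * ‖y‖ ^ 2 - ε * ‖x‖ ^ 2 : ℝ) : EReal) := by rw [← hs]; norm_cast
      _ = _ := by simp [hq x hx]
  · rw [← hs, EReal.coe_lt_coe_iff]
    calc s + ε * ‖y‖ ^ 2 - ε * q y = s - ε * r ^ 2 := by rw [hqy]; ring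
      _ < s := sub_lt_self s (by positivity)

theorem maximum_principle_subaffine_general {K : Set E} (hK : IsCompact K)
    (husc : UpperSemicontinuousOn u K) (hfin : ∀ y ∈ interior K, u y ≠ ⊤)
    (hsphere : ∀ y ∈ interior K, ∃ r > 0, sphere y r ⊆ K ∧
      ∀ a : E →ᵃ[ℝ] ℝ, (∀ x ∈ sphere y r, u x ≤ (a x : EReal)) → u y ≤ (a y : EReal)) :
    ⨆ x ∈ K, u x ≤ ⨆ x ∈ frontier K, u x := by
  refine iSup₂_le fun x₀ hx₀ ↦ le_of_not_gt fun hlt ↦ ?_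
  obtain ⟨ε, hε, y, hyK, hmax, hy⟩ := exists_isMaxOn_add_mul_and_lt hK husc
    (v := fun x ↦ ‖x‖ ^ 2) (by fun_prop) hx₀ hlt
  have hy_int : y ∈ interior K := by
    by_contra hy_int
    exact hy.not_ge (le_iSup₂ (f := fun x (_ : x ∈ frontier K) ↦ u x) y
      ⟨subset_closure hyK, hy_int⟩)
  obtain ⟨r, hr, hrK, hcomp⟩ := hsphere y hy_int
  obtain ⟨a, hau, hay⟩ := exists_affineMap_lt_of_isMaxOn_add_mul_norm_sq hr hε
    (ne_bot_of_gt hy) (hfin y hy_int) (hmax.on_subset hrK)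
  exact (hcomp a hau).not_gt hay

end InnerProductSpace

theorem SubaffineOn.exists_sphere_subset_forall_le {n : ℕ} {B : Set (Euc n)} {u : Euc n → EReal}
    {y : Euc n} (hu : SubaffineOn B u) (hB : B ∈ 𝓝 y) :
    ∃ r > 0, sphere y r ⊆ B ∧
      ∀ a : Euc n →ᵃ[ℝ] ℝ, (∀ x ∈ sphere y r, u x ≤ (a x : EReal)) → u y ≤ (a y : EReal) := by
  obtain ⟨r, hr, hrB⟩ := nhds_basis_closedBall.mem_iff.mp hB
  exact ⟨r, hr, sphere_subset_closedBall.trans hrB, fun a ha ↦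
    hu (closedBall y r) (isCompact_closedBall y r) hrB a
      (fun x hx ↦ ha x (frontier_closedBall_subset_sphere hx)) y (mem_closedBall_self hr.le)⟩

/-- Proposition 2.3, Maximum Principle: if `u` is u.s.c. on a compact
set `K` and locally subaffine on its interior, then `sup_K u ≤ sup_{∂K} u`. -/
theorem maximum_principle_subaffine {n : ℕ} (K : Set (Euc n)) (hK : IsCompact K)
    (u : Euc n → EReal) (husc : UpperSemicontinuousOn u K) (hfin : ∀ x ∈ K, u x ≠ ⊤)
    (hloc : ∀ x ∈ interior K, ∃ B, IsOpen B ∧ x ∈ B ∧ B ⊆ interior K ∧ SubaffineOn B u) :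
    ⨆ x ∈ K, u x ≤ ⨆ x ∈ frontier K, u x := by
  refine maximum_principle_subaffine_general hK husc (fun y hy ↦ hfin y (interior_subset hy))
    fun y hy ↦ ?_
  obtain ⟨B, hBo, hyB, hBK, hB⟩ := hloc y hy
  obtain ⟨r, hr, hrB, hcomp⟩ := hB.exists_sphere_subset_forall_le (hBo.mem_nhds hyB)
  exact ⟨r, hr, hrB.trans (hBK.trans interior_subset), hcomp⟩
end
end

section
/- Let X ⊂ ℝⁿ be open and u : X → ℝ twice continuously differentiable. Then u is subaffine on X if and only if for every x ∈ X the Hessian matrix Hess_x u is not negative definite, i.e., Hess_x u has at least one eigenvalue ≥ 0. -/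
open Set Metric Filter MeasureTheory Asymptotics
open scoped Topology BigOperators RealInnerProductSpace

noncomputable section

/-!
Subaffinity of an upper semicontinuous function is a local condition: if `u ≤ a` on `∂K` but
`u x₀ > a x₀` for some `x₀ ∈ K`, then for small `ε > 0` the function `u - a + ε‖·‖²` still attains
its maximum over `K` at an interior point `y`. Expanding `‖·‖²` at `y`, this says that near `y` the
function `u` lies below an affine function touching it at `y`, with gap at least `ε‖· - y‖²`.
Conversely, such a contact at `x` violates subaffinity on every small ball around `x`. By the
second-order Taylor expansion, contact at `x` means exactly that the second derivative at `x` is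
negative definite.
-/

section StrictAffineContact

variable {E : Type*} [NormedAddCommGroup E] [NormedSpace ℝ E]

/-- The negation of subaffinity at a point: near `x`, the function `u` lies below an affine function
that agrees with it at `x`, with a gap at least a positive multiple of `‖y - x‖ ^ 2`. -/
def HasStrictAffineContactAt (u : E → ℝ) (x : E) : Prop :=
  ∃ p : E →L[ℝ] ℝ, ∃ ε > 0, ∀ᶠ y in 𝓝 x, u y ≤ u x + p (y - x) - ε * ‖y - x‖ ^ 2

theorem isLittleO_taylor_two {F : Type*} [NormedAddCommGroup F] [NormedSpace ℝ F]
    {f : E → F} {f' : E → E →L[ℝ] F} {f'' : E →L[ℝ] E →L[ℝ] F} {x : E}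
    (hf : ∀ᶠ y in 𝓝 x, HasFDerivAt f (f' y) y) (hf' : HasFDerivAt f' f'' x) :
    (fun y => f y - f x - f' x (y - x) - (1 / 2 : ℝ) • f'' (y - x) (y - x))
      =o[𝓝 x] fun y => ‖y - x‖ ^ 2 := by
  have hsymm := second_derivative_symmetric_of_eventually hf hf'
  obtain ⟨r, hr, hball⟩ := Metric.eventually_nhds_iff_ball.1 hf
  have hremainder : ∀ y ∈ ball x r,
      HasFDerivWithinAt (fun y => f y - f' x (y - x) - (1 / 2 : ℝ) • f'' (y - x) (y - x))
        (f' y - f' x - f'' (y - x)) (ball x r) y := by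
    intro y hy
    have hsub : HasFDerivAt (fun y => y - x) (ContinuousLinearMap.id ℝ E) y :=
      (hasFDerivAt_id y).sub_const x
    have hlin := (f' x).hasFDerivAt.comp y hsub
    have hquad := ((f''.hasFDerivAt.comp y hsub).clm_apply hsub).const_smul (1 / 2 : ℝ)
    refine (((hball y hy).sub hlin).sub hquad).hasFDerivWithinAt.congr_fderiv ?_
    ext v
    have hhalves : (1 / 2 : ℝ) • (f'' (y - x) v + f'' v (y - x)) = f'' (y - x) v := by
      rw [hsymm v (y - x)]; module
    simpa using hhalves
  have hderiv : (fun y => f' y - f' x - f'' (y - x)) =o[𝓝[ball x r] x] fun y => ‖y - x‖ ^ 1 := by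
    simpa only [pow_one, isLittleO_norm_right] using hf'.isLittleO.mono nhdsWithin_le_nhds
  have h := (convex_ball x r).isLittleO_pow_succ (mem_ball_self hr) hremainder hderiv
  rw [nhdsWithin_eq_nhds.2 (ball_mem_nhds x hr)] at h
  refine h.congr_left fun y => ?_
  simp only [sub_self, map_zero, smul_zero, sub_zero]
  abel

theorem isCoercive_of_eventually {B : E →L[ℝ] E →L[ℝ] ℝ} {C : ℝ} (hC : 0 < C)
    (hB : ∀ᶠ v in 𝓝 0, C * ‖v‖ ^ 2 ≤ B v v) : IsCoercive B := by
  refine ⟨C, hC, fun v => ?_⟩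
  have hlim : Tendsto (fun t : ℝ => t • v) (𝓝[>] 0) (𝓝 0) := by
    have : Continuous fun t : ℝ => t • v := by fun_prop
    exact (this.tendsto' 0 0 (zero_smul ℝ v)).mono_left nhdsWithin_le_nhds
  obtain ⟨t, hBt, ht⟩ := ((hlim.eventually hB).and self_mem_nhdsWithin).exists
  have ht2 : 0 < t ^ 2 := pow_pos ht 2
  refine le_of_mul_le_mul_left ?_ ht2
  calc t ^ 2 * (C * ‖v‖ * ‖v‖) = C * ‖t • v‖ ^ 2 := by
        rw [norm_smul, mul_pow, Real.norm_eq_abs, sq_abs]; ring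
    _ ≤ B (t • v) (t • v) := hBt
    _ = t ^ 2 * B v v := by
        simp only [map_smul, smul_apply, smul_eq_mul]; ring

theorem isCoercive_iff_forall_pos [FiniteDimensional ℝ E] {B : E →L[ℝ] E →L[ℝ] ℝ} :
    IsCoercive B ↔ ∀ v ≠ 0, 0 < B v v := by
  constructor
  · rintro ⟨C, hC, hB⟩ v hv
    have := norm_pos_iff.2 hv
    exact lt_of_lt_of_le (by positivity) (hB v)
  · intro hB
    have hpos : ∀ v ∈ sphere (0 : E) 1, 0 < B v v :=
      fun v hv => hB v (ne_of_mem_sphere hv one_ne_zero)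
    have hcont : ContinuousOn (fun v => B v v) (sphere (0 : E) 1) := by fun_prop
    obtain ⟨C, hC, hBC⟩ := (isCompact_sphere (0 : E) 1).exists_forall_le' hcont hpos
    refine ⟨C, hC, fun v => ?_⟩
    rcases eq_or_ne v 0 with rfl | hv
    · simp
    have hv' : ‖v‖ ≠ 0 := norm_ne_zero_iff.2 hv
    have hunit : ‖v‖⁻¹ • v ∈ sphere (0 : E) 1 := by simp [norm_smul, hv']
    calc C * ‖v‖ * ‖v‖ = ‖v‖ ^ 2 * C := by ring
      _ ≤ ‖v‖ ^ 2 * B (‖v‖⁻¹ • v) (‖v‖⁻¹ • v) := by gcongr; exact hBC _ hunit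
      _ = B v v := by
        simp only [map_smul, smul_apply, smul_eq_mul]
        field_simp

theorem hasFDerivAt_eq_of_eventually_le {f : E → ℝ} {f' p : E →L[ℝ] ℝ} {x : E}
    (hf : HasFDerivAt f f' x) (hp : ∀ᶠ y in 𝓝 x, f y ≤ f x + p (y - x)) : f' = p := by
  have hmax : IsLocalMax (fun y => f y - p y) x := by
    filter_upwards [hp] with y hy
    rw [map_sub] at hy
    linarith
  exact sub_eq_zero.1 (hmax.hasFDerivAt_eq_zero (hf.sub p.hasFDerivAt))

section SecondDerivative

variable {u : E → ℝ} {u' : E → E →L[ℝ] ℝ} {u'' : E →L[ℝ] E →L[ℝ] ℝ} {x : E}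

theorem HasStrictAffineContactAt.isCoercive_neg (hu : ∀ᶠ y in 𝓝 x, HasFDerivAt u (u' y) y)
    (hu' : HasFDerivAt u' u'' x) (h : HasStrictAffineContactAt u x) : IsCoercive (-u'') := by
  obtain ⟨p, ε, hε, hp⟩ := h
  have hslope : u' x = p := by
    refine hasFDerivAt_eq_of_eventually_le hu.self_of_nhds (hp.mono fun y hy => hy.trans ?_)
    have : 0 ≤ ε * ‖y - x‖ ^ 2 := by positivity
    linarith
  have hnear : ∀ᶠ y in 𝓝 x, ε * ‖y - x‖ ^ 2 ≤ -u'' (y - x) (y - x) := by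
    filter_upwards [hp, (isLittleO_taylor_two hu hu').bound (half_pos hε)] with y hy htaylor
    rw [Real.norm_eq_abs, Real.norm_of_nonneg (by positivity), hslope, smul_eq_mul] at htaylor
    linarith [neg_abs_le (u y - u x - p (y - x) - 1 / 2 * u'' (y - x) (y - x))]
  refine isCoercive_of_eventually hε ?_
  have hshift : Tendsto (fun v => x + v) (𝓝 0) (𝓝 x) :=
    (continuous_const_add x).tendsto' 0 x (add_zero x)
  simpa using hshift.eventually hnear

theorem hasStrictAffineContactAt_of_isCoercive_neg
    (hu : ∀ᶠ y in 𝓝 x, HasFDerivAt u (u' y) y) (hu' : HasFDerivAt u' u'' x)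
    (h : IsCoercive (-u'')) : HasStrictAffineContactAt u x := by
  obtain ⟨C, hC, hcoercive⟩ := h
  refine ⟨u' x, C / 4, by positivity, ?_⟩
  filter_upwards [(isLittleO_taylor_two hu hu').bound (show 0 < C / 4 by positivity)]
    with y htaylor
  have hneg : C * ‖y - x‖ * ‖y - x‖ ≤ -u'' (y - x) (y - x) := hcoercive (y - x)
  rw [Real.norm_of_nonneg (by positivity : 0 ≤ ‖y - x‖ ^ 2), smul_eq_mul] at htaylor
  linarith [(Real.le_norm_self _).trans htaylor]

theorem hasStrictAffineContactAt_iff_isCoercive_neg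
    (hu : ∀ᶠ y in 𝓝 x, HasFDerivAt u (u' y) y) (hu' : HasFDerivAt u' u'' x) :
    HasStrictAffineContactAt u x ↔ IsCoercive (-u'') :=
  ⟨fun h => h.isCoercive_neg hu hu', hasStrictAffineContactAt_of_isCoercive_neg hu hu'⟩

end SecondDerivative

end StrictAffineContact

section Subaffine

theorem exists_isMaxOn_mem_interior_of_le_frontier {α : Type*} [TopologicalSpace α] {K : Set α}
    (hK : IsCompact K) {w φ : α → ℝ} (hw : UpperSemicontinuousOn w K) (hφ : ContinuousOn φ K)
    (hfrontier : ∀ x ∈ frontier K, w x ≤ 0) {x₀ : α} (hx₀ : x₀ ∈ K) (hpos : 0 < w x₀) :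
    ∃ ε > 0, ∃ y ∈ interior K, IsMaxOn (fun x => w x + ε * φ x) K y := by
  obtain ⟨M, hM⟩ := hK.bddAbove_image hφ
  obtain ⟨ε, hε, hεM⟩ := exists_pos_mul_lt hpos (M - φ x₀)
  have husc : UpperSemicontinuousOn (fun x => w x + ε * φ x) K :=
    hw.add (hφ.const_mul ε).upperSemicontinuousOn
  obtain ⟨y, hy, hmax⟩ := husc.exists_isMaxOn ⟨x₀, hx₀⟩ hK
  refine ⟨ε, hε, y, ?_, hmax⟩
  by_contra hy'
  have hwy : w y ≤ 0 := hfrontier y ⟨subset_closure hy, hy'⟩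
  have hφy : ε * φ y ≤ ε * M := by gcongr; exact hM (mem_image_of_mem φ hy)
  have hle : w x₀ + ε * φ x₀ ≤ w y + ε * φ y := hmax hx₀
  linarith

theorem hasStrictAffineContactAt_of_isLocalMax {E : Type*} [NormedAddCommGroup E]
    [InnerProductSpace ℝ E] {u : E → ℝ} {a : E →ᴬ[ℝ] ℝ} {ε : ℝ} {y : E} (hε : 0 < ε)
    (hmax : IsLocalMax (fun z => u z - a z + ε * ‖z‖ ^ 2) y) : HasStrictAffineContactAt u y := by
  refine ⟨a.contLinear - (2 * ε) • innerSL ℝ y, ε, hε, ?_⟩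
  filter_upwards [hmax] with z hz
  have haffine : a z - a y = a.contLinear (z - y) := (a.contLinear_map_vsub z y).symm
  have hnorm : ‖z‖ ^ 2 = ‖y‖ ^ 2 + 2 * ⟪y, z - y⟫ + ‖z - y‖ ^ 2 := by
    simpa using norm_add_sq_real y (z - y)
  simp only [sub_apply, smul_apply, innerSL_apply_apply,
    smul_eq_mul]
  rw [hnorm] at hz
  linarith

variable {n : ℕ} {X : Set (Euc n)} {u : Euc n → ℝ}

theorem SubaffineOn.not_hasStrictAffineContactAt (h : SubaffineOn X (fun x => (u x : EReal)))
    {x : Euc n} (hX : X ∈ 𝓝 x) : ¬ HasStrictAffineContactAt u x := by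
  rintro ⟨p, ε, hε, hp⟩
  obtain ⟨r, hr, hball⟩ := nhds_basis_closedBall.mem_iff.1 (inter_mem hX hp)
  let a : Euc n →ᵃ[ℝ] ℝ :=
    p.toLinearMap.toAffineMap + AffineMap.const ℝ (Euc n) (u x - p x - ε * r ^ 2)
  have ha (y : Euc n) : a y = u x + p (y - x) - ε * r ^ 2 := by
    change p y + (u x - p x - ε * r ^ 2) = _
    rw [map_sub]
    ring
  have hsphere : ∀ y ∈ frontier (closedBall x r), (u y : EReal) ≤ a y := by
    intro y hy
    have hy : y ∈ sphere x r := frontier_closedBall_subset_sphere hy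
    have huy : u y ≤ u x + p (y - x) - ε * ‖y - x‖ ^ 2 := (hball (sphere_subset_closedBall hy)).2
    rwa [EReal.coe_le_coe_iff, ha, ← mem_sphere_iff_norm.1 hy]
  have hcenter := h _ (isCompact_closedBall x r) (fun y hy => (hball hy).1) a hsphere x
    (mem_closedBall_self hr.le)
  rw [EReal.coe_le_coe_iff, ha, sub_self, map_zero] at hcenter
  have : 0 < ε * r ^ 2 := by positivity
  linarith

theorem subaffineOn_of_forall_not_hasStrictAffineContactAt (hu : UpperSemicontinuousOn u X)
    (h : ∀ x ∈ X, ¬ HasStrictAffineContactAt u x) : SubaffineOn X (fun x => (u x : EReal)) := by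
  intro K hK hKX a hfrontier x₀ hx₀
  simp only [EReal.coe_le_coe_iff] at hfrontier ⊢
  by_contra! hlt
  let a' : Euc n →ᴬ[ℝ] ℝ := ⟨a, a.continuous_of_finiteDimensional⟩
  have husc : UpperSemicontinuousOn (fun x => u x - a' x) K :=
    (hu.mono hKX).add a'.continuous.neg.continuousOn.upperSemicontinuousOn
  obtain ⟨ε, hε, y, hy, hmax⟩ := exists_isMaxOn_mem_interior_of_le_frontier hK husc
    (continuous_norm.pow 2).continuousOn (fun x hx => sub_nonpos.2 (hfrontier x hx)) hx₀
    (sub_pos.2 hlt)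
  exact h y (hKX (interior_subset hy))
    (hasStrictAffineContactAt_of_isLocalMax hε (hmax.isLocalMax (mem_interior_iff_mem_nhds.1 hy)))

theorem subaffineOn_iff_forall_not_hasStrictAffineContactAt (hX : IsOpen X)
    (hu : UpperSemicontinuousOn u X) :
    SubaffineOn X (fun x => (u x : EReal)) ↔ ∀ x ∈ X, ¬ HasStrictAffineContactAt u x :=
  ⟨fun h _ hx => h.not_hasStrictAffineContactAt (hX.mem_nhds hx),
    subaffineOn_of_forall_not_hasStrictAffineContactAt hu⟩

end Subaffine

section Hessian

variable {n : ℕ} {u : Euc n → ℝ} {x : Euc n}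

theorem dotProduct_hessMat_mulVec (u : Euc n → ℝ) (x v w : Euc n) :
    v.ofLp ⬝ᵥ (hessMat u x).mulVec w.ofLp = fderiv ℝ (fderiv ℝ u) x v w := by
  have hsum (v : Euc n) : v = ∑ i, v i • EuclideanSpace.single i (1 : ℝ) := by
    simpa using ((EuclideanSpace.basisFun (Fin n) ℝ).sum_repr v).symm
  have hexpand : fderiv ℝ (fderiv ℝ u) x v w = ∑ j, ∑ i, v i * (hessMat u x i j * w j) := by
    conv_lhs => rw [hsum v, hsum w]
    simp [hessMat, iteratedFDeriv_two_apply, Finset.mul_sum, mul_comm, mul_left_comm]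
  rw [hexpand, Finset.sum_comm]
  simp only [dotProduct, Matrix.mulVec, Finset.mul_sum]

theorem isHermitian_hessMat (h : IsSymmSndFDerivAt ℝ u x) : (hessMat u x).IsHermitian := by
  ext i j
  simp only [Matrix.conjTranspose_apply, star_trivial, hessMat, iteratedFDeriv_two_apply]
  exact h _ _

theorem posDef_neg_hessMat_iff (h : IsSymmSndFDerivAt ℝ u x) :
    (-(hessMat u x)).PosDef ↔ IsCoercive (-fderiv ℝ (fderiv ℝ u) x) := by
  have hquad (v : Euc n) : star v.ofLp ⬝ᵥ (-(hessMat u x)).mulVec v.ofLp =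
      (-fderiv ℝ (fderiv ℝ u) x) v v := by
    simp [Matrix.neg_mulVec, dotProduct_hessMat_mulVec]
  rw [Matrix.posDef_iff_dotProduct_mulVec, isCoercive_iff_forall_pos,
    and_iff_right (isHermitian_hessMat h).neg]
  simp only [← hquad]
  exact ⟨fun hpos v hv => hpos (by simpa using hv),
    fun hpos v hv => hpos (WithLp.toLp 2 v) (by simpa using hv)⟩

end Hessian

theorem c2_subaffine_iff_hessian_not_negDef_general {n : ℕ} (X : Set (Euc n)) (hX : IsOpen X)
    (u : Euc n → ℝ) (hu : DifferentiableOn ℝ u X) (hu' : DifferentiableOn ℝ (fderiv ℝ u) X) :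
    SubaffineOn X (fun x => (u x : EReal)) ↔ ∀ x ∈ X, ¬ (-(hessMat u x)).PosDef := by
  rw [subaffineOn_iff_forall_not_hasStrictAffineContactAt hX hu.continuousOn.upperSemicontinuousOn]
  refine forall₂_congr fun x hx => not_congr ?_
  have hXx : X ∈ 𝓝 x := hX.mem_nhds hx
  have hderiv : ∀ᶠ y in 𝓝 x, HasFDerivAt u (fderiv ℝ u y) y :=
    (hX.eventually_mem hx).mono fun y hy => (hu.differentiableAt (hX.mem_nhds hy)).hasFDerivAt
  have hderiv' : HasFDerivAt (fderiv ℝ u) (fderiv ℝ (fderiv ℝ u) x) x :=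
    (hu'.differentiableAt hXx).hasFDerivAt
  have hsymm : IsSymmSndFDerivAt ℝ u x := second_derivative_symmetric_of_eventually hderiv hderiv'
  rw [hasStrictAffineContactAt_iff_isCoercive_neg hderiv hderiv', posDef_neg_hessMat_iff hsymm]

/-- Proposition 2.4: a C² function is subaffine on an open set `X`
iff its Hessian is nowhere negative definite on `X`. -/
theorem c2_subaffine_iff_hessian_not_negDef {n : ℕ} (X : Set (Euc n)) (hX : IsOpen X)
    (u : Euc n → ℝ) (hu : ContDiffOn ℝ 2 u X) :
    SubaffineOn X (fun x => (u x : EReal)) ↔ ∀ x ∈ X, ¬ (-(hessMat u x)).PosDef :=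
  c2_subaffine_iff_hessian_not_negDef_general X hX u (hu.differentiableOn two_ne_zero)
    ((hu.fderiv_of_isOpen hX (m := 1) (by norm_num)).differentiableOn one_ne_zero)
end
end

section
/- Let X ⊂ ℝⁿ be open and u : X → [−∞, ∞) upper semicontinuous. Then the following are equivalent: (i) every point of X has a convex open neighborhood on which u is either a finite-valued convex function or identically −∞; (ii) u + v is subaffine on X for every subaffine function v on X (with the convention −∞ + t = −∞). -/
open Set Metric Filter MeasureTheory Asymptotics
open scoped Topology BigOperators RealInnerProductSpace

noncomputable section

/-!
A usc function fails to be subaffine exactly when some paraboloid `a x - ε * ‖x - x₀‖ ^ 2`, with `a`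
affine and `ε > 0`, touches it from above at a point `x₀`. If `u` is convex near `x₀`, subtracting a
supporting affine function of `u` turns such a contact for `u + v` into one for `v`; where `u = -∞`
there is no contact at all.

Conversely, for a segment in `X` take `v = -C * (distance to its line) ^ 2`. This `v` is constant
along the direction of the segment, so no strictly concave paraboloid touches it from above and it
is subaffine. On a thin cylinder around the segment a large `C` makes `u + v` negligible on the
lateral boundary, so comparison with the affine interpolation of upper bounds for `u` at the end
faces yields the convexity inequality for `u` on the axis, where `v = 0`. Hence `u` has a convex
epigraph over every ball in `X`, and on an open set a function with convex epigraph and without the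
value `+∞` is either finite or identically `-∞`.
-/

section UpperContact

/-- `x₀` is a *strict upper contact point* of `w`: near `x₀` the function `w` lies below an affine
function minus a positive multiple of `‖x - x₀‖ ^ 2`, with equality (hence finite value) at `x₀`.
Such points are the local obstructions to being subaffine. -/
def HasStrictUpperContactAt {E : Type*} [NormedAddCommGroup E] [NormedSpace ℝ E]
    (w : E → EReal) (x₀ : E) : Prop :=
  ∃ a : E →ᵃ[ℝ] ℝ, w x₀ = a x₀ ∧
    ∃ ε > 0, ∀ᶠ x in 𝓝 x₀, w x ≤ ((a x - ε * ‖x - x₀‖ ^ 2 : ℝ) : EReal)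

theorem exists_forall_le_coe_of_upperSemicontinuousOn {α : Type*} [TopologicalSpace α] {K : Set α}
    (hK : IsCompact K) {w : α → EReal} (hw : UpperSemicontinuousOn w K)
    (hw_top : ∀ x ∈ K, w x ≠ ⊤) : ∃ M : ℝ, ∀ x ∈ K, w x ≤ M := by
  rcases K.eq_empty_or_nonempty with rfl | hne
  · simp
  obtain ⟨y, hy, hmax⟩ := hw.exists_isMaxOn hne hK
  obtain ⟨M, hM, -⟩ := EReal.lt_iff_exists_real_btwn.1 (hw_top y hy).lt_top
  exact ⟨M, fun x hx => (hmax hx).trans hM.le⟩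

theorem exists_add_const_touching_of_upperSemicontinuousOn {α : Type*} [TopologicalSpace α]
    {K : Set α} (hK : IsCompact K) {w : α → EReal} (hw : UpperSemicontinuousOn w K)
    (hw_top : ∀ x ∈ K, w x ≠ ⊤) {φ : α → ℝ} (hφ : ContinuousOn φ K) {x₁ : α} (hx₁ : x₁ ∈ K)
    (hx₁_bot : w x₁ ≠ ⊥) :
    ∃ c : ℝ, (∃ x₀ ∈ K, w x₀ = ((φ x₀ + c : ℝ) : EReal)) ∧
      ∀ x ∈ K, w x ≤ ((φ x + c : ℝ) : EReal) := by
  have hsum : UpperSemicontinuousOn (fun x => w x + ((-φ x : ℝ) : EReal)) K :=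
    hw.add' (continuous_coe_real_ereal.comp_continuousOn hφ.neg).upperSemicontinuousOn
      fun x hx => EReal.continuousAt_add (.inl (hw_top x hx)) (.inr (EReal.coe_ne_top _))
  obtain ⟨x₀, hx₀, hmax⟩ := hsum.exists_isMaxOn ⟨x₁, hx₁⟩ hK
  have hx₀_bot : w x₀ ≠ ⊥ := by
    intro hbot
    have hle : w x₁ + ((-φ x₁ : ℝ) : EReal) ≤ w x₀ + ((-φ x₀ : ℝ) : EReal) := hmax hx₁
    simp [hbot, EReal.add_eq_bot_iff, hx₁_bot] at hle
  have hx₀_coe := EReal.coe_toReal (hw_top x₀ hx₀) hx₀_bot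
  refine ⟨(w x₀).toReal - φ x₀, ⟨x₀, hx₀, by rw [add_sub_cancel, hx₀_coe]⟩, fun x hx => ?_⟩
  have hle : w x + ((-φ x : ℝ) : EReal) ≤ w x₀ + ((-φ x₀ : ℝ) : EReal) := hmax hx
  rcases eq_or_ne (w x) ⊥ with hbot | hbot
  · simp [hbot]
  · rw [← hx₀_coe, ← EReal.coe_toReal (hw_top x hx) hbot] at hle
    rw [← EReal.coe_toReal (hw_top x hx) hbot]
    norm_cast at hle ⊢
    linarith

theorem exists_affineMap_forall_sub_sq_norm_eq {E : Type*} [NormedAddCommGroup E]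
    [InnerProductSpace ℝ E] (a : E →ᵃ[ℝ] ℝ) (δ c : ℝ) (x₁ x₀ : E) :
    ∃ b : E →ᵃ[ℝ] ℝ, ∀ x, a x - δ * ‖x - x₁‖ ^ 2 + c = b x - δ * ‖x - x₀‖ ^ 2 := by
  refine ⟨a - (2 * δ) • (innerₗ E (x₀ - x₁)).toAffineMap
    + AffineMap.const ℝ E (2 * δ * ⟪x₀ - x₁, x₀⟫ - δ * ‖x₀ - x₁‖ ^ 2 + c), fun x => ?_⟩
  have hsq : ‖x - x₁‖ ^ 2 = ‖x - x₀‖ ^ 2 + 2 * ⟪x₀ - x₁, x - x₀⟫ + ‖x₀ - x₁‖ ^ 2 := by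
    rw [real_inner_comm, ← norm_add_sq_real, sub_add_sub_cancel]
  rw [hsq, inner_sub_right]
  simp only [AffineMap.coe_add, AffineMap.coe_sub, AffineMap.coe_smul, LinearMap.coe_toAffineMap,
    AffineMap.coe_const, Pi.add_apply, Pi.sub_apply, Pi.smul_apply, innerₗ_apply_apply,
    Function.const_apply, smul_eq_mul]
  ring

theorem exists_hasStrictUpperContactAt_of_not_subaffineOn {n : ℕ} {X : Set (Euc n)}
    {w : Euc n → EReal} (hw : UpperSemicontinuousOn w X) (hw_top : ∀ x ∈ X, w x ≠ ⊤)
    (h : ¬ SubaffineOn X w) : ∃ x₀ ∈ X, HasStrictUpperContactAt w x₀ := by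
  unfold SubaffineOn at h
  push Not at h
  obtain ⟨K, hK, hKX, a, ha_frontier, x₁, hx₁, hlt⟩ := h
  have ha : Continuous a := a.continuous_of_finiteDimensional
  have hx₁_bot : w x₁ ≠ ⊥ := (bot_le.trans_lt hlt).ne'
  have hx₁_coe := EReal.coe_toReal (hw_top x₁ (hKX hx₁)) hx₁_bot
  have hgap : 0 < (w x₁).toReal - a x₁ := by
    rw [← hx₁_coe, EReal.coe_lt_coe_iff] at hlt
    linarith
  -- This choice of `δ` keeps the touching paraboloid, centred at `x₁`, off the frontier of `K`.
  obtain ⟨δ, hδ, hδ_lt⟩ := exists_pos_mul_lt hgap (diam K ^ 2)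
  obtain ⟨c, ⟨x₀, hx₀, hx₀_eq⟩, hle⟩ :=
    exists_add_const_touching_of_upperSemicontinuousOn hK (hw.mono hKX)
      (fun x hx => hw_top x (hKX hx)) (φ := fun x => a x - δ * ‖x - x₁‖ ^ 2)
      (by fun_prop) hx₁ hx₁_bot
  have hx₀_frontier : x₀ ∉ frontier K := by
    intro hfr
    have hc_ge : (w x₁).toReal - a x₁ ≤ c := by
      have := hle x₁ hx₁
      rw [← hx₁_coe, EReal.coe_le_coe_iff, sub_self, norm_zero] at this
      linarith
    have hc_le : c ≤ δ * ‖x₀ - x₁‖ ^ 2 := by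
      have := ha_frontier x₀ hfr
      rw [hx₀_eq, EReal.coe_le_coe_iff] at this
      linarith
    have hdiam : ‖x₀ - x₁‖ ^ 2 ≤ diam K ^ 2 := by
      gcongr
      exact dist_eq_norm x₀ x₁ ▸ dist_le_diam_of_mem hK.isBounded hx₀ hx₁
    nlinarith
  have hK_nhds : K ∈ 𝓝 x₀ := by
    rw [← mem_interior_iff_mem_nhds, ← self_sdiff_frontier]
    exact ⟨hx₀, hx₀_frontier⟩
  obtain ⟨b, hb⟩ := exists_affineMap_forall_sub_sq_norm_eq a δ c x₁ x₀
  refine ⟨x₀, hKX hx₀, b, by simp [hx₀_eq, hb], δ, hδ, ?_⟩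
  filter_upwards [hK_nhds] with x hx
  exact hb x ▸ hle x hx

namespace HasStrictUpperContactAt

theorem not_subaffineOn {n : ℕ} {X : Set (Euc n)} {w : Euc n → EReal} {x₀ : Euc n}
    (h : HasStrictUpperContactAt w x₀) (hX : X ∈ 𝓝 x₀) : ¬ SubaffineOn X w := by
  intro hsub
  obtain ⟨a, heq, ε, hε, hle⟩ := h
  obtain ⟨r, hr, hball⟩ := nhds_basis_closedBall.mem_iff.1 (inter_mem hle hX)
  have hx₀ := hsub (closedBall x₀ r) (isCompact_closedBall x₀ r) (fun x hx => (hball hx).2)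
    (a - AffineMap.const ℝ (Euc n) (ε * r ^ 2))
    (fun x hx => by
      have hx_sphere : ‖x - x₀‖ = r := mem_sphere_iff_norm.1 (frontier_closedBall_subset_sphere hx)
      simpa [hx_sphere] using (hball (isClosed_closedBall.frontier_subset hx)).1)
    x₀ (mem_closedBall_self hr.le)
  rw [heq, EReal.coe_le_coe_iff] at hx₀
  have : 0 < ε * r ^ 2 := by positivity
  simp only [AffineMap.coe_sub, AffineMap.coe_const, Pi.sub_apply, Function.const_apply] at hx₀
  linarith

variable {E : Type*} [NormedAddCommGroup E] [NormedSpace ℝ E]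

theorem of_add {u v : E → EReal} {x₀ : E} (h : HasStrictUpperContactAt (fun x => u x + v x) x₀)
    {b : E →ᵃ[ℝ] ℝ} (hb : u x₀ = b x₀) (hbu : ∀ᶠ x in 𝓝 x₀, (b x : EReal) ≤ u x) :
    HasStrictUpperContactAt v x₀ := by
  obtain ⟨a, heq, ε, hε, hle⟩ := h
  refine ⟨a - b, ?_, ε, hε, ?_⟩
  · simp only [hb] at heq
    cases hv : v x₀ <;> rw [hv] at heq
    · simp at heq
    · norm_cast at heq ⊢
      simp [← heq]
    · simp at heq
  · filter_upwards [hle, hbu] with x hx hbx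
    have hbv : (b x : EReal) + v x ≤ ((a x - ε * ‖x - x₀‖ ^ 2 : ℝ) : EReal) :=
      (add_le_add_left hbx (v x)).trans hx
    cases hv : v x <;> rw [hv] at hbv
    · exact bot_le
    · norm_cast at hbv ⊢
      simp only [AffineMap.coe_sub, Pi.sub_apply]
      linarith
    · rw [EReal.coe_add_top, top_le_iff] at hbv
      exact absurd hbv (EReal.coe_ne_top _)

end HasStrictUpperContactAt

theorem not_hasStrictUpperContactAt_of_const_on_line {E : Type*} [NormedAddCommGroup E]
    [NormedSpace ℝ E] {w : E → EReal} {x₀ d : E} (hd : d ≠ 0)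
    (hw : ∀ τ : ℝ, w (x₀ + τ • d) = w x₀) : ¬ HasStrictUpperContactAt w x₀ := by
  rintro ⟨a, heq, ε, hε, hle⟩
  have ha (τ : ℝ) : a (x₀ + τ • d) = a x₀ + τ * a.linear d := by
    rw [add_comm, ← vadd_eq_add, a.map_vadd, map_smul, vadd_eq_add, add_comm, smul_eq_mul]
  have hline : ∀ᶠ τ : ℝ in 𝓝 0, 0 ≤ τ * a.linear d - ε * ‖τ • d‖ ^ 2 := by
    have htendsto : Tendsto (fun τ : ℝ => x₀ + τ • d) (𝓝 0) (𝓝 x₀) := by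
      have hcont : Continuous fun τ : ℝ => x₀ + τ • d := by fun_prop
      simpa using hcont.tendsto 0
    filter_upwards [htendsto.eventually hle] with τ hτ
    rw [hw, heq, ha, EReal.coe_le_coe_iff, add_sub_cancel_left] at hτ
    linarith
  -- The affine terms at `τ` and `-τ` cancel, leaving only the quadratic ones.
  have hline_neg := (continuous_neg.tendsto' (0 : ℝ) 0 neg_zero).eventually hline
  obtain ⟨τ, ⟨hpos, hneg⟩, hτ : 0 < τ⟩ :=
    (((hline.and hline_neg).filter_mono nhdsWithin_le_nhds).and
      (self_mem_nhdsWithin (s := Ioi (0 : ℝ)))).exists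
  rw [neg_smul, norm_neg] at hneg
  have : 0 < ε * ‖τ • d‖ ^ 2 := by
    have := norm_pos_iff.2 (smul_ne_zero hτ.ne' hd)
    positivity
  linarith

theorem subaffineOn_iff_forall_not_hasStrictUpperContactAt {n : ℕ} {X : Set (Euc n)}
    (hX : IsOpen X) {w : Euc n → EReal} (hw : UpperSemicontinuousOn w X)
    (hw_top : ∀ x ∈ X, w x ≠ ⊤) : SubaffineOn X w ↔ ∀ x ∈ X, ¬ HasStrictUpperContactAt w x := by
  refine ⟨fun hsub x hx hcontact => hcontact.not_subaffineOn (hX.mem_nhds hx) hsub, fun h => ?_⟩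
  by_contra hsub
  obtain ⟨x, hx, hcontact⟩ := exists_hasStrictUpperContactAt_of_not_subaffineOn hw hw_top hsub
  exact h x hx hcontact

end UpperContact

section ConvexFunctions

theorem exists_continuousAffineMap_le_of_convexOn {E : Type*} [AddCommGroup E] [Module ℝ E]
    [TopologicalSpace E] [IsTopologicalAddGroup E] [ContinuousSMul ℝ E] {s : Set E}
    (hs : IsOpen s) {f : E → ℝ} (hf : ConvexOn ℝ s f) (hfc : ContinuousOn f s) {x₀ : E}
    (hx₀ : x₀ ∈ s) : ∃ b : E →ᴬ[ℝ] ℝ, b x₀ = f x₀ ∧ ∀ y ∈ s, b y ≤ f y := by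
  have hopen : IsOpen {z : E × ℝ | z.1 ∈ s ∧ f z.1 < z.2} := by
    have hdiff : ContinuousOn (fun z : E × ℝ => z.2 - f z.1) (Prod.fst ⁻¹' s) :=
      continuousOn_snd.sub (hfc.comp continuousOn_fst fun _ hz => hz)
    convert hdiff.isOpen_inter_preimage (hs.preimage continuous_fst) (isOpen_Ioi (a := 0)) using 1
    ext z
    simp
  obtain ⟨F, hF⟩ := geometric_hahn_banach_point_open hf.convex_strict_epigraph hopen
    (x := (x₀, f x₀)) (by simp)
  have hF_apply (y : E) (t : ℝ) : F (y, t) = F (y, 0) + t * F (0, 1) := by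
    rw [← smul_eq_mul, ← map_smul, ← map_add]
    simp
  have hF_vert : 0 < F (0, 1) := by
    have := hF (x₀, f x₀ + 1) ⟨hx₀, lt_add_one _⟩
    rw [hF_apply x₀ (f x₀), hF_apply x₀ (f x₀ + 1)] at this
    linarith
  refine ⟨ContinuousAffineMap.const ℝ E (f x₀ + F (x₀, 0) / F (0, 1))
    - ((F (0, 1))⁻¹ • F.comp (.inl ℝ E ℝ)).toContinuousAffineMap, ?_, fun y hy => ?_⟩
  · simp [div_eq_inv_mul]
  · have hsupport : F (x₀, 0) + f x₀ * F (0, 1) ≤ F (y, 0) + f y * F (0, 1) := by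
      have hclosure : ∀ t > f y, F (x₀, f x₀) ≤ F (y, t) := fun t ht => (hF (y, t) ⟨hy, ht⟩).le
      have hlim : Tendsto (fun t => F (y, t)) (𝓝[>] (f y)) (𝓝 (F (y, f y))) :=
        ((by fun_prop : Continuous fun t => F (y, t)).tendsto _).mono_left nhdsWithin_le_nhds
      rw [← hF_apply, ← hF_apply]
      exact ge_of_tendsto hlim (eventually_mem_nhdsWithin.mono hclosure)
    suffices f x₀ + F (x₀, 0) / F (0, 1) - F (y, 0) / F (0, 1) ≤ f y by
      simpa [div_eq_inv_mul] using this
    rw [add_sub_assoc, ← sub_div, ← le_sub_iff_add_le', div_le_iff₀ hF_vert]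
    linarith

variable {E : Type*} [AddCommGroup E] [Module ℝ E]

theorem eq_bot_of_convex_epigraph [TopologicalSpace E] [IsTopologicalAddGroup E]
    [ContinuousSMul ℝ E] {B : Set E} (hB : IsOpen B) {u : E → EReal}
    (hu : Convex ℝ {z : E × ℝ | z.1 ∈ B ∧ u z.1 ≤ z.2}) (hu_top : ∀ x ∈ B, u x ≠ ⊤)
    {p : E} (hp : p ∈ B) (hp_bot : u p = ⊥) {y : E} (hy : y ∈ B) : u y = ⊥ := by
  obtain ⟨τ, hτB, hτ : 1 < τ⟩ : ∃ τ : ℝ, AffineMap.lineMap p y τ ∈ B ∧ 1 < τ := by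
    have hcont : Continuous fun τ : ℝ => AffineMap.lineMap p y τ := AffineMap.lineMap_continuous
    have hmem : ∀ᶠ τ : ℝ in 𝓝 1, AffineMap.lineMap p y τ ∈ B :=
      (hcont.tendsto' 1 y (AffineMap.lineMap_apply_one p y)).eventually (hB.mem_nhds hy)
    exact ((hmem.filter_mono nhdsWithin_le_nhds).and
      (self_mem_nhdsWithin (s := Ioi (1 : ℝ)))).exists
  have hτ_inv : τ⁻¹ < 1 := inv_lt_one_of_one_lt₀ hτ
  obtain ⟨β, hβ, -⟩ := EReal.lt_iff_exists_real_btwn.1 (hu_top _ hτB).lt_top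
  have hle (α : ℝ) : u y ≤ AffineMap.lineMap α β τ⁻¹ := by
    have hmem := hu.lineMap_mem (x := (p, α)) (y := (AffineMap.lineMap p y τ, β))
      ⟨hp, by simp [hp_bot]⟩ ⟨hτB, hβ.le⟩ (t := τ⁻¹) ⟨by positivity, hτ_inv.le⟩
    have hy_eq : AffineMap.lineMap p (AffineMap.lineMap p y τ) τ⁻¹ = y := by
      rw [AffineMap.lineMap_lineMap_right, inv_mul_cancel₀ (by positivity),
        AffineMap.lineMap_apply_one]
    simpa only [mem_ofPred_eq, AffineMap.fst_lineMap, AffineMap.snd_lineMap, hy_eq] using hmem.2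
  rw [EReal.eq_bot_iff_forall_lt]
  intro c
  refine (hle ((c - 1 - τ⁻¹ * β) / (1 - τ⁻¹))).trans_lt ?_
  rw [EReal.coe_lt_coe_iff, AffineMap.lineMap_apply_module, smul_eq_mul, smul_eq_mul,
    mul_div_cancel₀ _ (by linarith)]
  linarith

theorem convexOn_toReal_of_convex_epigraph {B : Set E} {u : E → EReal}
    (hu : Convex ℝ {z : E × ℝ | z.1 ∈ B ∧ u z.1 ≤ z.2})
    (hu_coe : ∀ y ∈ B, u y = ((u y).toReal : EReal)) : ConvexOn ℝ B fun y => (u y).toReal := by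
  rw [convexOn_iff_convex_epigraph]
  convert hu using 1
  ext z
  refine and_congr_right fun hz => ?_
  conv_rhs => rw [hu_coe z.1 hz]
  rw [EReal.coe_le_coe_iff]

theorem exists_convexOn_or_forall_eq_bot_of_convex_epigraph [TopologicalSpace E]
    [IsTopologicalAddGroup E] [ContinuousSMul ℝ E] {B : Set E} (hB : IsOpen B) {u : E → EReal}
    (hu : Convex ℝ {z : E × ℝ | z.1 ∈ B ∧ u z.1 ≤ z.2}) (hu_top : ∀ x ∈ B, u x ≠ ⊤) :
    (∃ f : E → ℝ, ConvexOn ℝ B f ∧ ∀ y ∈ B, u y = (f y : EReal)) ∨ ∀ y ∈ B, u y = ⊥ := by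
  by_cases hbot : ∃ p ∈ B, u p = ⊥
  · obtain ⟨p, hp, hp_bot⟩ := hbot
    exact .inr fun y hy => eq_bot_of_convex_epigraph hB hu hu_top hp hp_bot hy
  · push Not at hbot
    have hu_coe (y : E) (hy : y ∈ B) : u y = ((u y).toReal : EReal) :=
      (EReal.coe_toReal (hu_top y hy) (hbot y hy)).symm
    exact .inl ⟨_, convexOn_toReal_of_convex_epigraph hu hu_coe, hu_coe⟩

end ConvexFunctions

section Cylinder

theorem isCompact_segment {E : Type*} [AddCommGroup E] [Module ℝ E] [TopologicalSpace E]
    [IsTopologicalAddGroup E] [ContinuousSMul ℝ E] (p q : E) : IsCompact (segment ℝ p q) :=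
  segment_eq_image_lineMap ℝ p q ▸ isCompact_Icc.image AffineMap.lineMap_continuous

theorem min_le_lineMap (α β : ℝ) {t : ℝ} (ht : t ∈ Icc 0 1) :
    min α β ≤ AffineMap.lineMap α β t :=
  (convex_Ici (min α β)).lineMap_mem (min_le_left α β) (min_le_right α β) ht

variable {E : Type*} [NormedAddCommGroup E] [NormedSpace ℝ E]

theorem exists_continuousAffineMap_eq_zero_eq_one {p q : E} (hpq : p ≠ q) :
    ∃ s : E →ᴬ[ℝ] ℝ, s p = 0 ∧ s q = 1 := by
  obtain ⟨l, hl⟩ := SeparatingDual.exists_eq_one (R := ℝ) (sub_ne_zero.2 hpq.symm)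
  refine ⟨l.toContinuousAffineMap - ContinuousAffineMap.const ℝ E (l p), by simp, ?_⟩
  simpa using hl

/-- Distance from `x` to the line through `p` and `q`, measured along the level set through `x` of
the affine function `s`. When `s p = 0` and `s q = 1`, `AffineMap.lineMap p q (s x)` is the point of
the line on that level set. -/
def axisDist (s : E →ᴬ[ℝ] ℝ) (p q x : E) : ℝ :=
  dist x (AffineMap.lineMap p q (s x))

/-- The solid cylinder of radius `r` around the segment from `p` to `q`, with end faces in the level
sets `s = 0` and `s = 1`. -/
def solidCylinder (s : E →ᴬ[ℝ] ℝ) (p q : E) (r : ℝ) : Set E :=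
  {x | s x ∈ Icc 0 1 ∧ axisDist s p q x ≤ r}

theorem continuous_axisDist (s : E →ᴬ[ℝ] ℝ) (p q : E) : Continuous (axisDist s p q) :=
  continuous_id.dist (AffineMap.lineMap_continuous.comp s.continuous)

theorem axisDist_add_smul {s : E →ᴬ[ℝ] ℝ} {p q : E} (hp : s p = 0) (hq : s q = 1) (x : E)
    (τ : ℝ) : axisDist s p q (x + τ • (q - p)) = axisDist s p q x := by
  have hs : s (x + τ • (q - p)) = τ + s x := by
    have hlin : s.contLinear (q - p) = 1 := by
      rw [← vsub_eq_sub, s.contLinear_map_vsub, hp, hq, vsub_eq_sub, sub_zero]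
    rw [add_comm, ← vadd_eq_add, s.map_vadd, map_smul, hlin, smul_eq_mul, mul_one, vadd_eq_add]
  have hline : AffineMap.lineMap p q (τ + s x)
      = AffineMap.lineMap p q (s x) + τ • (q - p) := by
    simp only [AffineMap.lineMap_apply_module']
    module
  rw [axisDist, hs, hline, dist_add_right, axisDist]

theorem apply_lineMap_of_eq_zero_of_eq_one {s : E →ᴬ[ℝ] ℝ} {p q : E} (hp : s p = 0)
    (hq : s q = 1) (t : ℝ) : s (AffineMap.lineMap p q t) = t := by
  rw [s.apply_lineMap, hp, hq]
  simp [AffineMap.lineMap_apply_module]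

theorem axisDist_lineMap {s : E →ᴬ[ℝ] ℝ} {p q : E} (hp : s p = 0) (hq : s q = 1) (t : ℝ) :
    axisDist s p q (AffineMap.lineMap p q t) = 0 := by
  rw [axisDist, apply_lineMap_of_eq_zero_of_eq_one hp hq, dist_self]

theorem lineMap_mem_solidCylinder {s : E →ᴬ[ℝ] ℝ} {p q : E} (hp : s p = 0) (hq : s q = 1) {r : ℝ}
    (hr : 0 ≤ r) {t : ℝ} (ht : t ∈ Icc 0 1) : AffineMap.lineMap p q t ∈ solidCylinder s p q r :=
  ⟨by rwa [apply_lineMap_of_eq_zero_of_eq_one hp hq], by rwa [axisDist_lineMap hp hq]⟩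

variable {s : E →ᴬ[ℝ] ℝ} {p q : E} {r : ℝ}

theorem solidCylinder_subset_cthickening :
    solidCylinder s p q r ⊆ cthickening r (segment ℝ p q) := by
  rintro x ⟨hsx, hx⟩
  refine mem_cthickening_of_dist_le x (AffineMap.lineMap p q (s x)) r _ ?_ hx
  exact segment_eq_image_lineMap ℝ p q ▸ mem_image_of_mem _ hsx

theorem isClosed_solidCylinder : IsClosed (solidCylinder s p q r) :=
  (isClosed_Icc.preimage s.continuous).inter
    (isClosed_le (continuous_axisDist s p q) continuous_const)

theorem isCompact_solidCylinder [ProperSpace E] : IsCompact (solidCylinder s p q r) :=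
  (isCompact_segment p q).cthickening.of_isClosed_subset isClosed_solidCylinder
    solidCylinder_subset_cthickening

theorem eq_of_mem_frontier_solidCylinder {x : E} (hx : x ∈ frontier (solidCylinder s p q r)) :
    s x = 0 ∨ s x = 1 ∨ axisDist s p q x = r := by
  by_contra! hne
  have hx_mem : x ∈ solidCylinder s p q r := isClosed_solidCylinder.frontier_subset hx
  have hopen : IsOpen {y | s y ∈ Ioo 0 1 ∧ axisDist s p q y < r} :=
    (isOpen_Ioo.preimage s.continuous).inter
      (isOpen_lt (continuous_axisDist s p q) continuous_const)
  have hsub : {y | s y ∈ Ioo 0 1 ∧ axisDist s p q y < r} ⊆ solidCylinder s p q r :=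
    fun y hy => ⟨Ioo_subset_Icc_self hy.1, hy.2.le⟩
  exact hx.2 (interior_maximal hsub hopen
    ⟨⟨hx_mem.1.1.lt_of_ne' hne.1, hx_mem.1.2.lt_of_ne hne.2.1⟩, hx_mem.2.lt_of_ne hne.2.2⟩)

theorem add_neg_mul_axisDist_sq_le_of_mem_frontier {u : E → EReal} {α β M C : ℝ}
    (hp : ∀ x ∈ closedBall p r, u x ≤ α) (hq : ∀ x ∈ closedBall q r, u x ≤ β)
    (hM : ∀ x ∈ solidCylinder s p q r, u x ≤ M) (hC : 0 ≤ C) (hMC : M - C * r ^ 2 ≤ min α β) {x : E}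
    (hx : x ∈ frontier (solidCylinder s p q r)) :
    u x + ((-(C * axisDist s p q x ^ 2) : ℝ) : EReal) ≤ (AffineMap.lineMap α β (s x) : ℝ) := by
  have hx_mem : x ∈ solidCylinder s p q r := isClosed_solidCylinder.frontier_subset hx
  have hpenalty : 0 ≤ C * axisDist s p q x ^ 2 := by positivity
  suffices ∃ γ : ℝ, u x ≤ γ ∧ γ - C * axisDist s p q x ^ 2 ≤ AffineMap.lineMap α β (s x) by
    obtain ⟨γ, hγ, hγ_le⟩ := this
    calc u x + ((-(C * axisDist s p q x ^ 2) : ℝ) : EReal)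
        ≤ γ + ((-(C * axisDist s p q x ^ 2) : ℝ) : EReal) := add_le_add_left hγ _
      _ = ((γ - C * axisDist s p q x ^ 2 : ℝ) : EReal) := by rw [← EReal.coe_add, sub_eq_add_neg]
      _ ≤ _ := EReal.coe_le_coe_iff.2 hγ_le
  rcases eq_of_mem_frontier_solidCylinder hx with hbase | htop | hside
  · refine ⟨α, hp x ?_, by simpa [hbase] using hpenalty⟩
    simpa [axisDist, hbase] using hx_mem.2
  · refine ⟨β, hq x ?_, by simpa [htop] using hpenalty⟩
    simpa [axisDist, htop] using hx_mem.2
  · refine ⟨M, hM x hx_mem, ?_⟩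
    rw [hside]
    exact hMC.trans (min_le_lineMap α β hx_mem.1)

end Cylinder

section Subaffine

variable {n : ℕ} {X : Set (Euc n)} {u : Euc n → EReal}

theorem subaffineOn_neg_mul_axisDist_sq {s : Euc n →ᴬ[ℝ] ℝ} {p q : Euc n} (hp : s p = 0)
    (hq : s q = 1) (C : ℝ) :
    SubaffineOn X fun x => ((-(C * axisDist s p q x ^ 2) : ℝ) : EReal) := by
  by_contra hsub
  have hcont : Continuous fun x => ((-(C * axisDist s p q x ^ 2) : ℝ) : EReal) :=
    continuous_coe_real_ereal.comp (((continuous_axisDist s p q).pow 2).const_mul C).neg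
  obtain ⟨x₀, -, hcontact⟩ := exists_hasStrictUpperContactAt_of_not_subaffineOn
    (hcont.upperSemicontinuous.upperSemicontinuousOn X) (fun x _ => EReal.coe_ne_top _) hsub
  have hpq : q - p ≠ 0 := by
    rintro h
    simp [sub_eq_zero.1 h, hp] at hq
  exact not_hasStrictUpperContactAt_of_const_on_line hpq
    (fun τ => by rw [axisDist_add_smul hp hq]) hcontact

theorem exists_forall_closedBall_le_solidCylinder_subset (hX : IsOpen X)
    (hu : UpperSemicontinuousOn u X) (s : Euc n →ᴬ[ℝ] ℝ) {p q : Euc n} (hpq : segment ℝ p q ⊆ X)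
    {α β : ℝ} (hα : u p < α) (hβ : u q < β) :
    ∃ r > 0, (∀ x ∈ closedBall p r, u x ≤ α) ∧ (∀ x ∈ closedBall q r, u x ≤ β) ∧
      solidCylinder s p q r ⊆ X := by
  have hball {y : Euc n} (hy : y ∈ X) {γ : ℝ} (hγ : u y < γ) :
      ∀ᶠ r in 𝓝 (0 : ℝ), ∀ x ∈ closedBall y r, u x ≤ γ :=
    eventually_closedBall_subset ((hX.nhdsWithin_eq hy ▸ hu y hy γ hγ).mono fun _ => le_of_lt)
  obtain ⟨δ, hδ, hδX⟩ := (isCompact_segment p q).exists_cthickening_subset_open hX hpq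
  have hnear := (hball (hpq (left_mem_segment ℝ p q)) hα).and
    (hball (hpq (right_mem_segment ℝ p q)) hβ)
  obtain ⟨r, ⟨hrp, hrq⟩, hr, hrδ⟩ :=
    ((hnear.filter_mono nhdsWithin_le_nhds).and (Ioc_mem_nhdsGT hδ)).exists
  exact ⟨r, hr, hrp, hrq,
    solidCylinder_subset_cthickening.trans ((cthickening_mono hrδ _).trans hδX)⟩

theorem le_lineMap_of_forall_subaffineOn_add (hX : IsOpen X) (hu : UpperSemicontinuousOn u X)
    (hu_top : ∀ x ∈ X, u x ≠ ⊤)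
    (hadd : ∀ v : Euc n → ℝ, Continuous v → SubaffineOn X (fun x => (v x : EReal)) →
      SubaffineOn X fun x => u x + v x)
    {p q : Euc n} (hpq : segment ℝ p q ⊆ X) {α β : ℝ} (hα : u p < α) (hβ : u q < β) {t : ℝ}
    (ht : t ∈ Icc 0 1) : u (AffineMap.lineMap p q t) ≤ (AffineMap.lineMap α β t : ℝ) := by
  rcases eq_or_ne p q with rfl | hne
  · have hmin : u p ≤ (min α β : ℝ) := by
      rw [EReal.coe_strictMono.monotone.map_min]
      exact le_min hα.le hβ.le
    rw [AffineMap.lineMap_same_apply]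
    exact hmin.trans (EReal.coe_le_coe_iff.2 (min_le_lineMap α β ht))
  obtain ⟨s, hsp, hsq⟩ := exists_continuousAffineMap_eq_zero_eq_one hne
  obtain ⟨r, hr, hrp, hrq, hrX⟩ :=
    exists_forall_closedBall_le_solidCylinder_subset hX hu s hpq hα hβ
  obtain ⟨M, hM⟩ := exists_forall_le_coe_of_upperSemicontinuousOn isCompact_solidCylinder
    (hu.mono hrX) fun x hx => hu_top x (hrX hx)
  obtain ⟨C, hC, hMC⟩ : ∃ C ≥ 0, M - C * r ^ 2 ≤ min α β := by
    refine ⟨max 0 ((M - min α β) / r ^ 2), le_max_left _ _, ?_⟩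
    rw [sub_le_comm, ← div_le_iff₀ (by positivity)]
    exact le_max_right _ _
  have hsub := hadd (fun x => -(C * axisDist s p q x ^ 2))
    (((continuous_axisDist s p q).pow 2).const_mul C).neg
    (subaffineOn_neg_mul_axisDist_sq hsp hsq C)
  have hle := hsub (solidCylinder s p q r) isCompact_solidCylinder hrX
    ((AffineMap.lineMap α β).comp (s : Euc n →ᵃ[ℝ] ℝ))
    (fun x hx => add_neg_mul_axisDist_sq_le_of_mem_frontier hrp hrq hM hC hMC hx)
    _ (lineMap_mem_solidCylinder hsp hsq hr.le ht)
  simpa only [axisDist_lineMap hsp hsq, AffineMap.comp_apply, ContinuousAffineMap.coe_toAffineMap,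
    apply_lineMap_of_eq_zero_of_eq_one hsp hsq, zero_pow two_ne_zero, mul_zero, neg_zero,
    EReal.coe_zero, add_zero] using hle

theorem convex_epigraph_of_forall_subaffineOn_add (hX : IsOpen X)
    (hu : UpperSemicontinuousOn u X) (hu_top : ∀ x ∈ X, u x ≠ ⊤)
    (hadd : ∀ v : Euc n → ℝ, Continuous v → SubaffineOn X (fun x => (v x : EReal)) →
      SubaffineOn X fun x => u x + v x)
    {B : Set (Euc n)} (hB : Convex ℝ B) (hBX : B ⊆ X) :
    Convex ℝ {z : Euc n × ℝ | z.1 ∈ B ∧ u z.1 ≤ z.2} := by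
  rw [convex_iff_segment_subset]
  rintro ⟨p, α⟩ ⟨hp, hα : u p ≤ α⟩ ⟨q, β⟩ ⟨hq, hβ : u q ≤ β⟩
  rw [segment_eq_image_lineMap]
  rintro _ ⟨t, ht, rfl⟩
  simp only [mem_ofPred_eq, AffineMap.fst_lineMap, AffineMap.snd_lineMap]
  refine ⟨hB.lineMap_mem hp hq ht, EReal.le_of_forall_lt_iff_le.1 fun γ hγ => ?_⟩
  rw [EReal.coe_lt_coe_iff] at hγ
  have hlt {a : EReal} {b : ℝ} (hab : a ≤ b) :
      a < ((b + (γ - AffineMap.lineMap α β t) : ℝ) : EReal) :=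
    hab.trans_lt (EReal.coe_lt_coe_iff.2 (by linarith))
  convert le_lineMap_of_forall_subaffineOn_add hX hu hu_top hadd
    ((hB.segment_subset hp hq).trans hBX) (hlt hα) (hlt hβ) ht using 2
  simp only [AffineMap.lineMap_apply_module', smul_eq_mul]
  ring

theorem HasStrictUpperContactAt.of_add_convexOn {B : Set (Euc n)} (hB : IsOpen B) {f : Euc n → ℝ}
    (hf : ConvexOn ℝ B f) (hfu : ∀ y ∈ B, u y = (f y : EReal)) {v : Euc n → EReal} {x₀ : Euc n}
    (hx₀ : x₀ ∈ B) (h : HasStrictUpperContactAt (fun x => u x + v x) x₀) :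
    HasStrictUpperContactAt v x₀ := by
  obtain ⟨b, hb_eq, hb_le⟩ :=
    exists_continuousAffineMap_le_of_convexOn hB hf (hf.continuousOn hB) hx₀
  refine h.of_add (b := b) (by simp [hfu x₀ hx₀, hb_eq]) ?_
  filter_upwards [hB.mem_nhds hx₀] with y hy
  simpa [hfu y hy] using hb_le y hy

end Subaffine

/-- Proposition 2.6: `u` is locally convex-or-`−∞` on `X` iff
`u + v` is subaffine on `X` for every subaffine function `v` on `X`. -/
theorem locally_convex_iff_add_subaffine {n : ℕ} (X : Set (Euc n)) (hX : IsOpen X)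
    (u : Euc n → EReal) (husc : UpperSemicontinuousOn u X) (hfin : ∀ x ∈ X, u x ≠ ⊤) :
    (∀ x ∈ X, ∃ B, IsOpen B ∧ Convex ℝ B ∧ x ∈ B ∧ B ⊆ X ∧
        ((∃ f : Euc n → ℝ, ConvexOn ℝ B f ∧ ∀ y ∈ B, u y = (f y : EReal)) ∨
          ∀ y ∈ B, u y = ⊥)) ↔
      (∀ v : Euc n → EReal, UpperSemicontinuousOn v X → (∀ x ∈ X, v x ≠ ⊤) →
        SubaffineOn X v → SubaffineOn X (fun x => u x + v x)) := by
  constructor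
  · intro hconvex v hv hv_top hv_sub
    have hadd : UpperSemicontinuousOn (fun x => u x + v x) X :=
      husc.add' hv fun x hx => EReal.continuousAt_add (.inl (hfin x hx)) (.inr (hv_top x hx))
    rw [subaffineOn_iff_forall_not_hasStrictUpperContactAt hX hv hv_top] at hv_sub
    rw [subaffineOn_iff_forall_not_hasStrictUpperContactAt hX hadd
      fun x hx => EReal.add_ne_top (hfin x hx) (hv_top x hx)]
    intro x hx hcontact
    obtain ⟨B, hB, -, hxB, -, ⟨f, hf, hfu⟩ | hbot⟩ := hconvex x hx
    · exact hv_sub x hx (hcontact.of_add_convexOn hB hf hfu hxB)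
    · obtain ⟨a, heq, -⟩ := hcontact
      simp [hbot x hxB] at heq
  · intro hadd x hx
    obtain ⟨r, hr, hrX⟩ := isOpen_iff.1 hX x hx
    have hepi := convex_epigraph_of_forall_subaffineOn_add hX husc hfin
      (fun v hv => hadd (fun y => v y)
        ((continuous_coe_real_ereal.comp hv).upperSemicontinuous.upperSemicontinuousOn X)
        fun _ _ => EReal.coe_ne_top _) (convex_ball x r) hrX
    exact ⟨ball x r, isOpen_ball, convex_ball x r, mem_ball_self hr, hrX,
      exists_convexOn_or_forall_eq_bot_of_convex_epigraph isOpen_ball hepi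
        fun y hy => hfin y (hrX hy)⟩
end
end

section
/- Let F ⊂ Sym²(ℝⁿ) be a Dirichlet set with Dirichlet dual F̃, X ⊂ ℝⁿ open, and u : X → [−∞, ∞) upper semicontinuous. Then u is of type F on X if and only if for every matrix B ∈ F̃ the function x ↦ u(x) + ½⟨Bx, x⟩ is subaffine on X. -/
open Set Metric Filter MeasureTheory Asymptotics
open scoped Topology BigOperators RealInnerProductSpace

noncomputable section

/-! Subaffinity fails precisely when there are a point `x₀`, an affine function `a` and `ε > 0` with
`w x₀ = a x₀` and `w x ≤ a x - ε‖x - x₀‖²` near `x₀`. Given a failing comparison `a x₁ < w x₁`,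
such a point is found by maximizing `w - a + ε‖· - x₁‖²` for small `ε`: since `‖x - x₁‖²` and
`‖x - x₀‖²` differ by an affine function, the added term becomes the gap. The gap absorbs errors of
order `o(‖x - x₀‖²)`, so in `u + v` the `C²` function `v` may be replaced by any other one with the
same Hessian at `x₀`, in particular by the quadratic form of `Hess v x₀ ∈ F̃`. -/

section ERealAddCoe

variable {e : EReal} {r s : ℝ}

lemma ereal_add_coe_le_coe_iff : e + (r : EReal) ≤ s ↔ e ≤ ((s - r : ℝ) : EReal) := by
  rw [EReal.coe_sub,
    EReal.le_sub_iff_add_le (.inl (EReal.coe_ne_bot r)) (.inl (EReal.coe_ne_top r))]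

lemma ereal_add_coe_eq_coe_iff : e + (r : EReal) = s ↔ e = ((s - r : ℝ) : EReal) := by
  induction e with
  | bot => simp [-EReal.coe_sub]
  | top => simp [-EReal.coe_sub]
  | coe x => norm_cast; exact eq_sub_iff_add_eq.symm

lemma upperSemicontinuousOn_add_coe_s6 {α : Type*} [TopologicalSpace α] {s : Set α} {f : α → EReal}
    {g : α → ℝ} (hf : UpperSemicontinuousOn f s) (hg : ContinuousOn g s) :
    UpperSemicontinuousOn (fun x => f x + (g x : EReal)) s :=
  hf.add' (continuous_coe_real_ereal.comp_continuousOn hg).upperSemicontinuousOn fun x _ =>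
    EReal.continuousAt_add (.inr (EReal.coe_ne_bot (g x))) (.inr (EReal.coe_ne_top (g x)))

end ERealAddCoe

section SecondDerivative

variable {E G : Type*} [NormedAddCommGroup E] [NormedAddCommGroup G]

lemma fderiv_bilinear_apply_self {𝕜 : Type*} [NontriviallyNormedField 𝕜] [NormedSpace 𝕜 E]
    [NormedSpace 𝕜 G] (L : E →L[𝕜] E →L[𝕜] G) :
    fderiv 𝕜 (fun x => L x x) = ⇑(L + L.flip) := by
  funext x
  rw [L.fderiv_of_bilinear differentiableAt_fun_id differentiableAt_fun_id]
  ext y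
  simp

lemma isLittleO_sub_fderiv_of_iteratedFDeriv_two_eq_zero [NormedSpace ℝ E] [NormedSpace ℝ G]
    {f : E → G} {x₀ : E} (hf : ContDiffAt ℝ 2 f x₀) (hf₂ : iteratedFDeriv ℝ 2 f x₀ = 0) :
    (fun x => f x - f x₀ - fderiv ℝ f x₀ (x - x₀)) =o[𝓝 x₀] fun x => ‖x - x₀‖ ^ 2 := by
  have hderiv_zero : fderiv ℝ (fderiv ℝ f) x₀ = 0 := by
    ext y z
    have hyz := DFunLike.congr_fun hf₂ ![y, z]
    rwa [iteratedFDeriv_two_apply] at hyz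
  have hderiv : (fun x => fderiv ℝ f x - fderiv ℝ f x₀) =o[𝓝 x₀] fun x => ‖x - x₀‖ ^ 1 := by
    have h := ((hf.fderiv_right (m := 1) le_rfl).differentiableAt one_ne_zero).hasFDerivAt.isLittleO
    simpa [hderiv_zero] using h.norm_right
  obtain ⟨r, hr, hdiff⟩ : ∃ r > 0, ∀ x ∈ ball x₀ r, DifferentiableAt ℝ f x :=
    Metric.eventually_nhds_iff_ball.1 <|
      (hf.eventually (by simp)).mono fun x hx => hx.differentiableAt two_ne_zero
  have h := (convex_ball x₀ r).isLittleO_pow_succ (mem_ball_self hr)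
    (f := fun x => f x - fderiv ℝ f x₀ (x - x₀)) (f' := fun x => fderiv ℝ f x - fderiv ℝ f x₀)
    (fun x hx => ((hdiff x hx).hasFDerivAt.sub
      ((fderiv ℝ f x₀).hasFDerivAt.comp x ((hasFDerivAt_id x).sub_const x₀))).hasFDerivWithinAt)
    (hderiv.mono nhdsWithin_le_nhds)
  rw [nhdsWithin_eq_nhds.2 (ball_mem_nhds x₀ hr)] at h
  simpa [sub_right_comm] using h

end SecondDerivative

section Hessian

variable {n : ℕ}

/-- The form `bilin A` as a continuous bilinear map, so that it can be differentiated. -/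
def bilinCLM (A : Matrix (Fin n) (Fin n) ℝ) : Euc n →L[ℝ] Euc n →L[ℝ] ℝ :=
  ∑ i, ∑ j, A i j • ((EuclideanSpace.proj i : Euc n →L[ℝ] ℝ).smulRight
    (EuclideanSpace.proj j : Euc n →L[ℝ] ℝ))

lemma bilinCLM_apply (A : Matrix (Fin n) (Fin n) ℝ) (v w : Euc n) :
    bilinCLM A v w = bilin A v w := by
  simp [bilinCLM, bilin, mul_assoc]

lemma bilin_single (A : Matrix (Fin n) (Fin n) ℝ) (i j : Fin n) :
    bilin A (EuclideanSpace.single i 1) (EuclideanSpace.single j 1) = A i j := by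
  simp [bilin]

lemma half_bilin_eq_bilinCLM (A : Matrix (Fin n) (Fin n) ℝ) :
    (fun x : Euc n => 1 / 2 * bilin A x x) =
      fun x => ((1 / 2 : ℝ) • bilinCLM A) x x := by
  funext x
  simp [bilinCLM_apply]

lemma contDiff_half_bilin (A : Matrix (Fin n) (Fin n) ℝ) {k : WithTop ℕ∞} :
    ContDiff ℝ k (fun x : Euc n => 1 / 2 * bilin A x x) := by
  rw [half_bilin_eq_bilinCLM]
  exact (ContinuousLinearMap.contDiff _).clm_apply contDiff_id

lemma hessMat_half_bilin (A : Matrix (Fin n) (Fin n) ℝ) (x : Euc n) :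
    hessMat (fun x => 1 / 2 * bilin A x x) x = (1 / 2 : ℝ) • (A + A.transpose) := by
  ext i j
  rw [hessMat, iteratedFDeriv_two_apply, half_bilin_eq_bilinCLM, fderiv_bilinear_apply_self,
    ContinuousLinearMap.fderiv]
  simp [bilinCLM_apply, bilin_single, mul_add]

lemma hessMat_half_bilin_symMat (B : SymMat n) (x : Euc n) :
    hessMat (fun x => 1 / 2 * bilin (B : Matrix (Fin n) (Fin n) ℝ) x x) x = B := by
  have htranspose : (B : Matrix (Fin n) (Fin n) ℝ).transpose = B :=
    selfAdjoint.mem_iff.1 B.2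
  rw [hessMat_half_bilin, htranspose, ← two_smul ℝ, smul_smul]
  norm_num

lemma isTypeFC2_half_bilin {F : Set (SymMat n)} {B : SymMat n} (hB : B ∈ F) (X : Set (Euc n)) :
    IsTypeFC2 F X (fun x => 1 / 2 * bilin (B : Matrix (Fin n) (Fin n) ℝ) x x) :=
  ⟨(contDiff_half_bilin _).contDiffOn, fun x _ => ⟨B, hB, (hessMat_half_bilin_symMat B x).symm⟩⟩

lemma iteratedFDeriv_two_eq_of_hessMat_eq {f g : Euc n → ℝ} {x : Euc n}
    (h : hessMat f x = hessMat g x) : iteratedFDeriv ℝ 2 f x = iteratedFDeriv ℝ 2 g x := by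
  apply ContinuousMultilinearMap.toMultilinearMap_injective
  refine Module.Basis.ext_multilinear
    (fun _ => (EuclideanSpace.basisFun (Fin n) ℝ).toBasis) fun σ => ?_
  have hσ : (fun i => EuclideanSpace.single (σ i) (1 : ℝ)) =
      ![EuclideanSpace.single (σ 0) 1, EuclideanSpace.single (σ 1) 1] := by
    ext i
    fin_cases i <;> rfl
  simpa [hσ, hessMat] using congrFun₂ h (σ 0) (σ 1)

end Hessian

section PerturbedMaximum

lemma exists_mem_interior_isMaxOn_add_mul {α : Type*} [TopologicalSpace α] {K : Set α}
    (hK : IsCompact K) {f : α → EReal} (hf : UpperSemicontinuousOn f K)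
    (hfrontier : ∀ x ∈ frontier K, f x ≤ 0) {x₁ : α} (hx₁ : x₁ ∈ K) (hpos : 0 < f x₁)
    {φ : α → ℝ} (hφ : ContinuousOn φ K) (hφ₁ : 0 ≤ φ x₁) :
    ∃ ε > 0, ∃ x₀ ∈ interior K, 0 < f x₀ ∧
      IsMaxOn (fun x => f x + ((ε * φ x : ℝ) : EReal)) K x₀ := by
  obtain ⟨δ, hδ, hδf⟩ := EReal.lt_iff_exists_real_btwn.1 hpos
  obtain ⟨C, hC⟩ := hK.exists_bound_of_continuousOn hφ
  obtain ⟨ε, hε, hεC⟩ := exists_pos_mul_lt (EReal.coe_pos.1 hδ) C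
  obtain ⟨x₀, hx₀, hmax⟩ := (upperSemicontinuousOn_add_coe_s6 hf
    (hφ.const_mul ε)).exists_isMaxOn ⟨x₁, hx₁⟩ hK
  have hperturb : ε * φ x₀ ≤ δ := by
    linarith [mul_le_mul_of_nonneg_left (le_of_abs_le (hC x₀ hx₀)) hε.le]
  have hx₀_pos : 0 < f x₀ := by
    by_contra! hle
    refine hδf.not_ge ?_
    calc f x₁ ≤ f x₁ + ((ε * φ x₁ : ℝ) : EReal) :=
          le_add_of_nonneg_right (EReal.coe_nonneg.2 (mul_nonneg hε.le hφ₁))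
      _ ≤ f x₀ + ((ε * φ x₀ : ℝ) : EReal) := hmax hx₁
      _ ≤ 0 + (δ : EReal) := add_le_add hle (EReal.coe_le_coe hperturb)
      _ = δ := zero_add _
  have hint : x₀ ∈ interior K := by
    by_contra hx₀int
    exact hx₀_pos.not_ge (hfrontier x₀ ⟨subset_closure hx₀, hx₀int⟩)
  exact ⟨ε, hε, x₀, hint, hx₀_pos, hmax⟩

end PerturbedMaximum

section StrictContact

/-- `w` has a strict affine contact at `x₀`: near `x₀` it lies below some affine function with a
quadratic gap, and equals it at `x₀`. These contacts are the obstructions to subaffinity. -/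
def StrictAffineContactAt {E : Type*} [NormedAddCommGroup E] [NormedSpace ℝ E]
    (w : E → EReal) (x₀ : E) : Prop :=
  ∃ ε > 0, ∃ a : E →ᵃ[ℝ] ℝ, w x₀ = a x₀ ∧
    ∀ᶠ x in 𝓝 x₀, w x ≤ ((a x - ε * ‖x - x₀‖ ^ 2 : ℝ) : EReal)

namespace StrictAffineContactAt

variable {E : Type*} [NormedAddCommGroup E] [NormedSpace ℝ E] {w : E → EReal}
  {f g : E → ℝ} {x₀ : E}

lemma congr_isLittleO {b : E →ᵃ[ℝ] ℝ} (h : StrictAffineContactAt (fun x => w x + (f x : EReal)) x₀)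
    (hfg : (fun x => g x - f x - b x) =o[𝓝 x₀] fun x => ‖x - x₀‖ ^ 2) :
    StrictAffineContactAt (fun x => w x + (g x : EReal)) x₀ := by
  obtain ⟨ε, hε, a, ha, hle⟩ := h
  have hsmall : ∀ᶠ x in 𝓝 x₀, |g x - f x - b x| ≤ ε / 2 * ‖x - x₀‖ ^ 2 := by
    simpa using hfg.def (half_pos hε)
  have hzero : g x₀ - f x₀ - b x₀ = 0 := by simpa using hsmall.self_of_nhds
  refine ⟨ε / 2, half_pos hε, a + b, ?_, ?_⟩
  · rw [ereal_add_coe_eq_coe_iff] at ha ⊢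
    rw [ha, AffineMap.coe_add, Pi.add_apply]
    congr 1
    linarith
  · filter_upwards [hle, hsmall] with x hx hgap
    rw [ereal_add_coe_le_coe_iff] at hx ⊢
    refine hx.trans (EReal.coe_le_coe ?_)
    rw [AffineMap.coe_add, Pi.add_apply]
    linarith [le_of_abs_le hgap]

lemma congr_iteratedFDeriv_two (h : StrictAffineContactAt (fun x => w x + (f x : EReal)) x₀)
    (hf : ContDiffAt ℝ 2 f x₀) (hg : ContDiffAt ℝ 2 g x₀)
    (hfg : iteratedFDeriv ℝ 2 f x₀ = iteratedFDeriv ℝ 2 g x₀) :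
    StrictAffineContactAt (fun x => w x + (g x : EReal)) x₀ := by
  have hzero : iteratedFDeriv ℝ 2 (g - f) x₀ = 0 := by
    rw [iteratedFDeriv_sub_apply hg hf, hfg, sub_self]
  have hlittle := isLittleO_sub_fderiv_of_iteratedFDeriv_two_eq_zero (f := g - f)
    (hg.sub hf) hzero
  let D : E →ₗ[ℝ] ℝ := fderiv ℝ (g - f) x₀
  refine h.congr_isLittleO (b := D.toAffineMap + AffineMap.const ℝ E ((g - f) x₀ - D x₀))
    (hlittle.congr_left fun x => ?_)
  simp only [AffineMap.coe_add, Pi.add_apply, Pi.sub_apply, LinearMap.coe_toAffineMap,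
    AffineMap.const_apply, D, ContinuousLinearMap.coe_coe, map_sub]
  ring

end StrictAffineContactAt

lemma strictAffineContactAt_of_isLocalMax {E : Type*} [NormedAddCommGroup E] [InnerProductSpace ℝ E]
    {w : E → EReal} {a : E →ᵃ[ℝ] ℝ} {ε : ℝ} (hε : 0 < ε) {x₀ x₁ : E}
    (hbot : w x₀ ≠ ⊥) (htop : w x₀ ≠ ⊤)
    (hmax : IsLocalMax (fun x => w x + ((ε * ‖x - x₁‖ ^ 2 - a x : ℝ) : EReal)) x₀) :
    StrictAffineContactAt w x₀ := by
  obtain ⟨r, hr⟩ : ∃ r : ℝ, w x₀ = r := ⟨_, (EReal.coe_toReal htop hbot).symm⟩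
  let ℓ : E →ₗ[ℝ] ℝ := (2 * ε) • innerₛₗ ℝ (x₀ - x₁)
  refine ⟨ε, hε, a - ℓ.toAffineMap + AffineMap.const ℝ E (r - a x₀ + ℓ x₀), by simp [hr], ?_⟩
  filter_upwards [hmax] with x hx
  rw [hr, ← EReal.coe_add, ereal_add_coe_le_coe_iff] at hx
  refine hx.trans (EReal.coe_le_coe (le_of_eq ?_))
  have hexpand : ‖x - x₁‖ ^ 2 =
      ‖x - x₀‖ ^ 2 + 2 * (⟪x₀ - x₁, x⟫ - ⟪x₀ - x₁, x₀⟫) + ‖x₀ - x₁‖ ^ 2 := by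
    rw [← inner_sub_right, real_inner_comm, ← norm_add_sq_real, sub_add_sub_cancel]
  simp only [AffineMap.coe_add, AffineMap.coe_sub, Pi.add_apply, Pi.sub_apply,
    LinearMap.coe_toAffineMap, AffineMap.const_apply, ℓ, LinearMap.smul_apply, innerₛₗ_apply_apply,
    smul_eq_mul, hexpand]
  ring

end StrictContact

section Subaffine

variable {n : ℕ} {X : Set (Euc n)} {w : Euc n → EReal}

lemma SubaffineOn.not_strictAffineContactAt (hw : SubaffineOn X w) {x₀ : Euc n} (hx₀ : X ∈ 𝓝 x₀) :
    ¬ StrictAffineContactAt w x₀ := by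
  rintro ⟨ε, hε, a, ha, hle⟩
  obtain ⟨r, hr, hball⟩ := Metric.nhds_basis_closedBall.mem_iff.1 (inter_mem hx₀ hle)
  have hgap : 0 < ε * r ^ 2 := by positivity
  have hcenter : w x₀ ≤ ((a x₀ - ε * r ^ 2 : ℝ) : EReal) := by
    refine hw _ (isCompact_closedBall x₀ r) (fun x hx => (hball hx).1)
      (a - AffineMap.const ℝ (Euc n) (ε * r ^ 2)) (fun x hx => ?_) x₀ (mem_closedBall_self hr.le)
    have hnorm : ‖x - x₀‖ = r := mem_sphere_iff_norm.1 (frontier_closedBall_subset_sphere hx)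
    simpa [hnorm] using (hball (isClosed_closedBall.frontier_subset hx)).2
  rw [ha, EReal.coe_le_coe_iff] at hcenter
  linarith

lemma subaffineOn_of_forall_not_strictAffineContactAt (husc : UpperSemicontinuousOn w X)
    (htop : ∀ x ∈ X, w x ≠ ⊤) (h : ∀ x ∈ X, ¬ StrictAffineContactAt w x) : SubaffineOn X w := by
  intro K hK hKX a hfrontier x₁ hx₁
  by_contra! hlt
  have hneg : ∀ x, w x + ((-a x : ℝ) : EReal) ≤ 0 ↔ w x ≤ a x := fun x => by
    simpa using ereal_add_coe_le_coe_iff (e := w x) (r := -a x) (s := 0)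
  have ha : Continuous a := a.continuous_of_finiteDimensional
  obtain ⟨ε, hε, x₀, hx₀, hpos, hmax⟩ := exists_mem_interior_isMaxOn_add_mul hK
    (upperSemicontinuousOn_add_coe_s6 (husc.mono hKX) ha.neg.continuousOn)
    (fun x hx => (hneg x).2 (hfrontier x hx)) hx₁ (not_le.1 ((hneg x₁).not.2 hlt.not_ge))
    (φ := fun x => ‖x - x₁‖ ^ 2) (by fun_prop) (by positivity)
  have hx₀X : x₀ ∈ X := hKX (interior_subset hx₀)
  have hbot : w x₀ ≠ ⊥ := fun hw => by simp [hw] at hpos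
  have hlocal : IsLocalMax (fun x => w x + ((ε * ‖x - x₁‖ ^ 2 - a x : ℝ) : EReal)) x₀ := by
    simpa only [add_assoc, ← EReal.coe_add, Pi.neg_apply, neg_add_eq_sub] using
      hmax.isLocalMax (mem_interior_iff_mem_nhds.1 hx₀)
  exact h x₀ hx₀X (strictAffineContactAt_of_isLocalMax hε hbot (htop x₀ hx₀X) hlocal)

end Subaffine

theorem typeF_iff_quadratic_tests_general {n : ℕ} (F : Set (SymMat n)) (X : Set (Euc n))
    (hX : IsOpen X) (u : Euc n → EReal) (husc : UpperSemicontinuousOn u X)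
    (hfin : ∀ x ∈ X, u x ≠ ⊤) :
    IsTypeF F X u ↔ ∀ B ∈ dirDual F,
      SubaffineOn X
        (fun x => u x + ((1/2 * bilin (B : Matrix (Fin n) (Fin n) ℝ) x x : ℝ) : EReal)) := by
  refine ⟨fun hu B hB => hu _ (isTypeFC2_half_bilin hB X), fun hquad v hv => ?_⟩
  refine subaffineOn_of_forall_not_strictAffineContactAt
    (upperSemicontinuousOn_add_coe_s6 husc hv.1.continuousOn)
    (fun x hx => EReal.add_ne_top (hfin x hx) (EReal.coe_ne_top _)) fun x₀ hx₀ hcontact => ?_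
  have hX₀ : X ∈ 𝓝 x₀ := hX.mem_nhds hx₀
  obtain ⟨B, hB, hBv⟩ := hv.2 x₀ hx₀
  have hhess : hessMat v x₀ =
      hessMat (fun x => 1/2 * bilin (B : Matrix (Fin n) (Fin n) ℝ) x x) x₀ := by
    rw [hessMat_half_bilin_symMat, hBv]
  exact (hquad B hB).not_strictAffineContactAt hX₀ <| hcontact.congr_iteratedFDeriv_two
    (hv.1.contDiffAt hX₀) (contDiff_half_bilin _).contDiffAt
    (iteratedFDeriv_two_eq_of_hessMat_eq hhess)

/-- Lemma 4.6: `u` is of type `F` iff `u + ½⟨Bx,x⟩` is subaffine for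
every quadratic `B` in the Dirichlet dual of `F`. -/
theorem typeF_iff_quadratic_tests {n : ℕ} (F : Set (SymMat n)) (hF : IsDirichletSet F)
    (X : Set (Euc n)) (hX : IsOpen X) (u : Euc n → EReal)
    (husc : UpperSemicontinuousOn u X) (hfin : ∀ x ∈ X, u x ≠ ⊤) :
    IsTypeF F X u ↔ ∀ B ∈ dirDual F,
      SubaffineOn X
        (fun x => u x + ((1/2 * bilin (B : Matrix (Fin n) (Fin n) ℝ) x x : ℝ) : EReal)) :=
  typeF_iff_quadratic_tests_general F X hX u husc hfin
end
end

section
/- Let F ⊂ Sym²(ℝⁿ) be a Dirichlet set with ray set F⃗. Then a matrix A belongs to Int F⃗ if and only if there exist ε > 0 and R > 0 such that C(A − εI) ∈ F for every C ≥ R. -/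
open Set Metric Filter MeasureTheory Asymptotics
open scoped Topology BigOperators RealInnerProductSpace

noncomputable section

/-! The Loewner order on symmetric matrices turns a Dirichlet set into an upper set and makes `I` an
interior point of the cone of nonnegative elements, so every `A - ε I` is separated from `A` by a
whole neighbourhood: it lies below all matrices near `A`, and above all matrices near `A - 2ε I`.
Hence, for an upper set `S`, the point `A` is interior to the closure of `S` exactly when
`A - ε I ∈ S` for some `ε > 0`. The directions whose rays eventually stay in a Dirichlet set form
such an upper set. -/

lemma eventually_atTop_iff_exists_gt {α : Type*} [Preorder α] [IsDirectedOrder α] [NoMaxOrder α]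
    {p : α → Prop} (a : α) :
    (∀ᶠ x in atTop, p x) ↔ ∃ b, a < b ∧ ∀ x, b ≤ x → p x := by
  have : Nonempty α := ⟨a⟩
  refine ⟨fun h => ?_, fun ⟨b, _, hb⟩ => eventually_atTop.2 ⟨b, hb⟩⟩
  exact ((eventually_gt_atTop a).and (eventually_forall_ge_atTop.2 h)).exists

lemma exists_pos_sub_smul_mem {E : Type*} [AddCommGroup E] [Module ℝ E] [TopologicalSpace E]
    [IsTopologicalAddGroup E] [ContinuousSMul ℝ E] {U : Set E} {x : E} (hU : U ∈ 𝓝 x) (e : E) :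
    ∃ ε : ℝ, 0 < ε ∧ x - ε • e ∈ U := by
  have hlim : Tendsto (fun ε : ℝ => x - ε • e) (𝓝 0) (𝓝 x) := by
    have hcont : Continuous fun ε : ℝ => x - ε • e := by fun_prop
    simpa only [zero_smul, sub_zero] using hcont.tendsto 0
  have hsmall : ∀ᶠ ε : ℝ in 𝓝[>] 0, x - ε • e ∈ U := nhdsWithin_le_nhds (hlim hU)
  exact (eventually_mem_nhdsWithin.and hsmall).exists

/-- The directions `x` whose ray `t • x` stays in `F` for all large `t`. The ray set of `F` is the
closure of this set. -/
def eventualRays {E : Type*} [SMul ℝ E] (F : Set E) : Set E :=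
  {x | ∀ᶠ t : ℝ in atTop, t • x ∈ F}

section OrderedModule

variable {E : Type*} [AddCommGroup E] [Preorder E] [Module ℝ E] [PosSMulMono ℝ E]

lemma isUpperSet_eventualRays {F : Set E} (hF : IsUpperSet F) : IsUpperSet (eventualRays F) := by
  intro x y hxy hx
  filter_upwards [hx, eventually_ge_atTop 0] with t htx ht
  exact hF (smul_le_smul_of_nonneg_left hxy ht) htx

variable [IsOrderedAddMonoid E] [TopologicalSpace E] [IsTopologicalAddGroup E]

lemma Ici_sub_smul_mem_nhds [ContinuousConstSMul ℝ E] {e : E} (he : Ici 0 ∈ 𝓝 e) {ε : ℝ}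
    (hε : 0 < ε) (x : E) : Ici (x - ε • e) ∈ 𝓝 x := by
  have hlim : Tendsto (fun y => e + ε⁻¹ • (y - x)) (𝓝 x) (𝓝 e) := by
    have hcont : Continuous fun y => e + ε⁻¹ • (y - x) := by fun_prop
    simpa only [sub_self, smul_zero, add_zero] using hcont.tendsto x
  filter_upwards [hlim he] with y hy
  have hrescale : ε • (e + ε⁻¹ • (y - x)) = y - (x - ε • e) := by
    rw [smul_add, smul_inv_smul₀ hε.ne']
    abel
  exact sub_nonneg.1 (hrescale ▸ smul_nonneg hε.le hy)

lemma Iic_add_smul_mem_nhds [ContinuousConstSMul ℝ E] {e : E} (he : Ici 0 ∈ 𝓝 e) {ε : ℝ}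
    (hε : 0 < ε) (x : E) : Iic (x + ε • e) ∈ 𝓝 x := by
  filter_upwards [continuous_neg.continuousAt (Ici_sub_smul_mem_nhds he hε (-x))] with y hy
  rw [← neg_add', mem_preimage, mem_Ici, neg_le_neg_iff] at hy
  exact hy

variable [ContinuousSMul ℝ E]

lemma mem_interior_closure_iff_of_isUpperSet {S : Set E} (hS : IsUpperSet S) {e : E}
    (he : Ici 0 ∈ 𝓝 e) {x : E} :
    x ∈ interior (closure S) ↔ ∃ ε : ℝ, 0 < ε ∧ x - ε • e ∈ S := by
  rw [mem_interior_iff_mem_nhds]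
  constructor
  · intro hx
    obtain ⟨δ, hδ, hcl⟩ := exists_pos_sub_smul_mem hx e
    have hbelow : Iic (x - (δ / 2) • e) ∈ 𝓝 (x - δ • e) := by
      have hmid : x - δ • e + (δ / 2) • e = x - (δ / 2) • e := by module
      exact hmid ▸ Iic_add_smul_mem_nhds he (half_pos hδ) (x - δ • e)
    obtain ⟨y, hy, hyS⟩ := mem_closure_iff_nhds.1 hcl _ hbelow
    exact ⟨δ / 2, half_pos hδ, hS hy hyS⟩
  · rintro ⟨ε, hε, hmem⟩
    exact mem_of_superset (Ici_sub_smul_mem_nhds he hε x)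
      ((hS.Ici_subset hmem).trans subset_closure)

theorem mem_interior_raySet_iff_general {F : Set E} (hF : IsUpperSet F) {e : E}
    (he : Ici 0 ∈ 𝓝 e) (x : E) :
    x ∈ interior (closure (eventualRays F)) ↔
      ∃ ε : ℝ, 0 < ε ∧ ∃ R : ℝ, 0 < R ∧ ∀ C : ℝ, R ≤ C → C • (x - ε • e) ∈ F := by
  rw [mem_interior_closure_iff_of_isUpperSet (isUpperSet_eventualRays hF) he]
  simp only [eventualRays, mem_ofPred_eq, eventually_atTop_iff_exists_gt (0 : ℝ)]

end OrderedModule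

section SelfAdjoint

instance continuousSMul_selfAdjoint {R A : Type*} [Semiring R] [StarRing R] [TrivialStar R]
    [AddCommGroup A] [Module R A] [StarAddMonoid A] [StarModule R A] [TopologicalSpace R]
    [TopologicalSpace A] [ContinuousSMul R A] : ContinuousSMul R (selfAdjoint A) :=
  inferInstanceAs (ContinuousSMul R (selfAdjoint.submodule R A))

instance posSMulMono_selfAdjoint {R A : Type*} [Semiring R] [Preorder R] [StarRing R]
    [TrivialStar R] [AddCommGroup A] [Preorder A] [Module R A] [StarAddMonoid A] [StarModule R A]
    [PosSMulMono R A] : PosSMulMono R (selfAdjoint A) where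
  smul_le_smul_of_nonneg_left _ hr a b (hab : (a : A) ≤ b) :=
    Subtype.coe_le_coe.1 (smul_le_smul_of_nonneg_left hab hr)

lemma abs_sub_one_le_of_mem_spectrum {A : Type*} [NormedRing A] [NormedAlgebra ℝ A]
    [CompleteSpace A] {a : A} {r : ℝ} (hr : r ∈ spectrum ℝ a) : |r - 1| ≤ ‖a - 1‖ * ‖(1 : A)‖ := by
  have hmem : r - 1 ∈ spectrum ℝ (a - 1) := by
    rw [← map_one (algebraMap ℝ A), ← spectrum.sub_singleton_eq]
    exact Set.sub_mem_sub hr (mem_singleton 1)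
  exact spectrum.norm_le_norm_mul_of_mem hmem

theorem Ici_zero_mem_nhds_one_selfAdjoint {A : Type*} [NormedRing A] [NormedAlgebra ℝ A]
    [CompleteSpace A] [StarRing A] [PartialOrder A] [StarOrderedRing A] [NonnegSpectrumClass ℝ A]
    [ContinuousFunctionalCalculus ℝ A IsSelfAdjoint] :
    Ici (0 : selfAdjoint A) ∈ 𝓝 1 := by
  have hnear : ∀ᶠ a : selfAdjoint A in 𝓝 1, ‖(a : A) - 1‖ * ‖(1 : A)‖ < 1 := by
    have hcont : Continuous fun a : selfAdjoint A => ‖(a : A) - 1‖ * ‖(1 : A)‖ := by fun_prop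
    exact hcont.continuousAt.eventually_lt_const (by simp)
  filter_upwards [hnear] with a ha
  refine (StarOrderedRing.nonneg_iff_spectrum_nonneg (R := ℝ) (a : A) a.2).2 fun r hr => ?_
  linarith [(abs_le.1 (abs_sub_one_le_of_mem_spectrum hr)).1]

end SelfAdjoint

section SymMat

variable {n : ℕ}

open scoped MatrixOrder

lemma IsDirichletSet.isUpperSet {F : Set (SymMat n)} (hF : IsDirichletSet F) : IsUpperSet F := by
  intro A B hAB hA
  rw [← add_sub_cancel A B]
  exact hF.add_psd A hA (B - A) (Matrix.le_iff.1 hAB)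

-- The operator norm enters only through its topology, which is by construction the entrywise one.
open scoped Matrix.Norms.L2Operator in
lemma Ici_zero_mem_nhds_symOne : Ici (0 : SymMat n) ∈ 𝓝 (symOne n) :=
  Ici_zero_mem_nhds_one_selfAdjoint

lemma raySet_eq_closure_eventualRays (F : Set (SymMat n)) :
    raySet F = closure (eventualRays F) := by
  simp only [raySet, eventualRays, eventually_atTop]

end SymMat

/-- Corollary 5.10: `A ∈ Int F⃗` iff `C(A − εI) ∈ F` for all
sufficiently large `C`, for some `ε > 0`. -/
theorem mem_interior_raySet_iff {n : ℕ} (F : Set (SymMat n)) (hF : IsDirichletSet F)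
    (A : SymMat n) :
    A ∈ interior (raySet F) ↔
      ∃ ε : ℝ, 0 < ε ∧ ∃ R : ℝ, 0 < R ∧
        ∀ C : ℝ, R ≤ C → C • (A - ε • symOne n) ∈ F := by
  rw [raySet_eq_closure_eventualRays]
  open scoped MatrixOrder in
  exact mem_interior_raySet_iff_general hF.isUpperSet Ici_zero_mem_nhds_symOne A
end
end
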